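/- arXiv:1412.7363 — 7 statements merged into one kernel-verified Lean document; each statement's English description precedes it below -/
import Mathlib

section
/- Let b, c be positive integers, let p ≥ 1 be an integer, and let χ₁, χ₂ be non-principal primitive Dirichlet characters of the same modulus k. If (−1)^{p+1}·χ₁(−1)·χ₂(−1) = −1, then s_p(b,c:χ₁,χ₂) = 0. -/
open Finset

/-- The `n`-th Bernoulli polynomial evaluated at a real number. -/
noncomputable def BPoly (n : ℕ) (x : ℝ) : ℝ :=
  Polynomial.eval x ((Polynomial.bernoulli n).map (algebraMap ℚ ℝ))

open scoped Classical in
/-- The `n`-th Bernoulli function `B̄ₙ`. -/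
noncomputable def BFun (n : ℕ) (x : ℝ) : ℝ :=
  if n = 1 then (if ∃ m : ℤ, x = (m : ℝ) then 0 else x - ⌊x⌋ - 1/2)
  else BPoly n (Int.fract x)

/-- The generalized Bernoulli function `B̄_{m,χ}` attached to a Dirichlet character. -/
noncomputable def BFunChar {k : ℕ} (χ : DirichletCharacter ℂ k) (m : ℕ) (x : ℝ) : ℂ :=
  (k : ℂ) ^ ((m : ℤ) - 1) *
    ∑ n ∈ Finset.Icc 1 (k - 1), (starRingEnd ℂ) (χ (n : ZMod k)) * ((BFun m (((n : ℝ) + x) / k)) : ℂ)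

/-- The generalized Bernoulli number `B_{m,χ} = B̄_{m,χ}(0)`. -/
noncomputable def BNumChar {k : ℕ} (χ : DirichletCharacter ℂ k) (m : ℕ) : ℂ := BFunChar χ m 0

/-- The complex conjugate of a Dirichlet character. -/
noncomputable def conjChar {k : ℕ} (χ : DirichletCharacter ℂ k) : DirichletCharacter ℂ k :=
  χ.ringHomComp (starRingEnd ℂ)

/-- The character Dedekind sum `s_p(b,c : χ₁, χ₂)` for characters of the same modulus. -/
noncomputable def sChar {k : ℕ} (p b c : ℕ) (χ₁ χ₂ : DirichletCharacter ℂ k) : ℂ :=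
  ∑ n ∈ Finset.range (c * k),
    χ₁ (n : ZMod k) * BFunChar χ₂ p (((b : ℝ) * n) / c) * ((BFun 1 ((n : ℝ) / (c * k))) : ℂ)

/-!
The term `n = 0` vanishes because `B̄₁(0) = 0`. On the others, reflecting `n ↦ ck - n` replaces `n`,
`bn/c` and `n/(ck)` by their negatives, up to periods of `χ₁`, `B̄_{p,χ₂}` and `B̄₁`. Those three
functions have parities `χ₁(-1)`, `χ₂(-1)(-1)^p` and `-1`, so the sum equals
`(-1)^{p+1} χ₁(-1) χ₂(-1)` times itself.
-/

theorem sum_Ico_one_reflect {M : Type*} [AddCommMonoid M] (f : ℕ → M) (N : ℕ) :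
    ∑ n ∈ Ico 1 N, f (N - n) = ∑ n ∈ Ico 1 N, f n := by
  simpa using sum_Ico_reflect f 1 N.le_succ

theorem BPoly_eq_bernoulliFun : BPoly = bernoulliFun := rfl

theorem BFun_eq_ite (n : ℕ) (x : ℝ) :
    BFun n x = if n = 1 ∧ Int.fract x = 0 then 0 else bernoulliFun n (Int.fract x) := by
  have integer_iff : (∃ m : ℤ, x = m) ↔ Int.fract x = 0 := by
    simp only [Int.fract_eq_zero_iff, Set.mem_range, eq_comm]
  by_cases hn : n = 1
  · subst hn
    simp only [BFun, integer_iff, if_true, true_and, bernoulliFun_one, Int.fract]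
  · simp only [BFun, hn, if_false, false_and, BPoly_eq_bernoulliFun]

theorem BFun_one_zero : BFun 1 0 = 0 := by
  simp [BFun_eq_ite]

theorem BFun_periodic (n : ℕ) : Function.Periodic (BFun n) 1 := fun x ↦ by
  simp only [BFun_eq_ite, Int.fract_add_one]

theorem bernoulliFun_zero_eq_neg_one_pow_mul {n : ℕ} (hn : n ≠ 1) :
    bernoulliFun n 0 = (-1) ^ n * bernoulliFun n 0 := by
  rw [← bernoulliFun_eval_one_sub, sub_zero, bernoulliFun_endpoints_eq_of_ne_one hn]

theorem BFun_neg (n : ℕ) (x : ℝ) : BFun n (-x) = (-1) ^ n * BFun n x := by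
  simp only [BFun_eq_ite, Int.fract_neg_eq_zero]
  by_cases hx : Int.fract x = 0
  · by_cases hn : n = 1
    · simp [hx, hn]
    · simpa [hx, hn, Int.fract_neg_eq_zero.mpr hx] using bernoulliFun_zero_eq_neg_one_pow_mul hn
  · simp only [hx, and_false, if_false, Int.fract_neg hx, bernoulliFun_eval_one_sub]

theorem dirichletCharacter_natCast_sub {R : Type*} [CommMonoidWithZero R] {k N n : ℕ}
    (χ : DirichletCharacter R k) (hkN : k ∣ N) (hnN : n ≤ N) :
    χ ((N - n : ℕ) : ZMod k) = χ (-1) * χ n := by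
  rw [Nat.cast_sub hnN, (ZMod.natCast_eq_zero_iff N k).mpr hkN, zero_sub, ← map_mul, neg_one_mul]

theorem conj_dirichletCharacter_neg_one {R : Type*} [CommRing R] [NoZeroDivisors R] [StarRing R]
    {k : ℕ} (χ : DirichletCharacter R k) : (starRingEnd R) (χ (-1)) = χ (-1) := by
  rcases χ.even_or_odd with h | h <;> rw [h] <;> simp only [map_neg, map_one]

section BFunChar

variable {k : ℕ} [NeZero k] (χ : DirichletCharacter ℂ k)

theorem BFunChar_periodic (m : ℕ) : Function.Periodic (BFunChar χ m) k := fun x ↦ by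
  have hk : (k : ℝ) ≠ 0 := NeZero.ne _
  simp only [BFunChar, ← add_assoc, add_div _ (k : ℝ), div_self hk, BFun_periodic m _]

theorem BFunChar_neg (m : ℕ) (x : ℝ) :
    BFunChar χ m (-x) = χ (-1) * (-1) ^ m * BFunChar χ m x := by
  have hk : (k : ℝ) ≠ 0 := NeZero.ne _
  have Icc_eq_Ico : Icc 1 (k - 1) = Ico 1 k :=
    Icc_sub_one_right_eq_Ico_of_not_isMin (by simpa using NeZero.ne k) 1
  simp only [BFunChar, Icc_eq_Ico]
  rw [← sum_Ico_one_reflect, mul_left_comm, mul_sum (a := χ (-1) * (-1) ^ m)]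
  congr 1
  refine sum_congr rfl fun n hn ↦ ?_
  have hnk : n ≤ k := (mem_Ico.mp hn).2.le
  have BFun_reflect : BFun m (((k - n : ℕ) + -x) / k) = (-1) ^ m * BFun m ((n + x) / k) := by
    have : (((k - n : ℕ) : ℝ) + -x) / k = 1 - (n + x) / k := by
      rw [Nat.cast_sub hnk]
      field_simp
      ring
    rw [this, (BFun_periodic m).sub_eq', BFun_neg]
  rw [dirichletCharacter_natCast_sub χ dvd_rfl hnk, BFun_reflect, map_mul,
    conj_dirichletCharacter_neg_one]
  push_cast
  ring

end BFunChar

section sChar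

variable {k : ℕ} [NeZero k] (p b : ℕ) {c : ℕ} (χ₁ χ₂ : DirichletCharacter ℂ k)

theorem sChar_eq_sum_Ico (hc : 0 < c) :
    sChar p b c χ₁ χ₂ = ∑ n ∈ Ico 1 (c * k),
      χ₁ n * BFunChar χ₂ p (b * n / c) * BFun 1 (n / (c * k)) := by
  rw [sChar, sum_range_eq_add_Ico _ (Nat.mul_pos hc (NeZero.pos k))]
  simp [BFun_one_zero]

theorem sChar_eq_neg_one_pow_mul_sChar (hc : 0 < c) :
    sChar p b c χ₁ χ₂ = (-1) ^ (p + 1) * χ₁ (-1) * χ₂ (-1) * sChar p b c χ₁ χ₂ := by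
  have hk : (k : ℝ) ≠ 0 := NeZero.ne _
  have hc₀ : (c : ℝ) ≠ 0 := Nat.cast_ne_zero.mpr hc.ne'
  rw [sChar_eq_sum_Ico p b χ₁ χ₂ hc, mul_sum]
  conv_lhs => rw [← sum_Ico_one_reflect]
  refine sum_congr rfl fun n hn ↦ ?_
  have hn_le : n ≤ c * k := (mem_Ico.mp hn).2.le
  have BFunChar_reflect : BFunChar χ₂ p (b * (c * k - n : ℕ) / c) =
      χ₂ (-1) * (-1) ^ p * BFunChar χ₂ p (b * n / c) := by
    have : (b : ℝ) * (c * k - n : ℕ) / c = b * k - b * n / c := by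
      rw [Nat.cast_sub hn_le, Nat.cast_mul]
      field_simp
    rw [this, (BFunChar_periodic χ₂ p).nat_mul_sub_eq, BFunChar_neg]
  have BFun_reflect : BFun 1 ((c * k - n : ℕ) / (c * k)) = -BFun 1 (n / (c * k)) := by
    have : ((c * k - n : ℕ) : ℝ) / (c * k) = 1 - n / (c * k) := by
      rw [Nat.cast_sub hn_le, Nat.cast_mul]
      field_simp
    rw [this, (BFun_periodic 1).sub_eq', BFun_neg, pow_one, neg_one_mul]
  rw [dirichletCharacter_natCast_sub χ₁ (k.dvd_mul_left c) hn_le, BFunChar_reflect, BFun_reflect]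
  push_cast
  ring

theorem sChar_eq_zero_general (hc : 0 < c)
    (hpar : (-1 : ℂ) ^ (p + 1) * χ₁ (-1) * χ₂ (-1) = -1) :
    sChar p b c χ₁ χ₂ = 0 := by
  have h := sChar_eq_neg_one_pow_mul_sChar p b χ₁ χ₂ hc
  rwa [hpar, neg_one_mul, self_eq_neg] at h

end sChar

/-- The character Dedekind sum `s_p(b,c:χ₁,χ₂)` vanishes when
`(−1)^{p+1} χ₁(−1) χ₂(−1) = −1`. -/
theorem sChar_eq_zero (b c : ℕ) (hb : 0 < b) (hc : 0 < c) (p : ℕ) (hp : 1 ≤ p)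
    (k : ℕ) [NeZero k] (χ₁ χ₂ : DirichletCharacter ℂ k)
    (h₁ : χ₁ ≠ 1) (h₂ : χ₂ ≠ 1) (hprim₁ : χ₁.IsPrimitive) (hprim₂ : χ₂.IsPrimitive)
    (hpar : (-1 : ℂ) ^ (p + 1) * χ₁ (-1) * χ₂ (-1) = -1) :
    sChar p b c χ₁ χ₂ = 0 :=
  sChar_eq_zero_general p b χ₁ χ₂ hc hpar
end

section
/- Let r ≥ 1 and n₁, …, n_r ≥ 0 be integers, let b₁, …, b_r be nonzero real numbers, let y₁, …, y_r and x be real numbers. Define Î = (1/(n₁!⋯n_r!))·∫_0^x B_{n₁}(b₁z+y₁)⋯B_{n_r}(b_rz+y_r) dz, and for nonnegative integers m₁, …, m_r define Ĉ_{m₁,…,m_r} = (1/(m₁!⋯m_r!))·( ∏_{l=1}^r B_{m_l}(b_l x + y_l) − ∏_{l=1}^r B_{m_l}(y_l) ) (with the understanding that b_r is paired with index m_r, etc.). Then Î = Σ_{a=0}^{n₁+⋯+n_{r−1}} (−1)^a · Σ_{j₁+⋯+j_{r−1}=a, 0≤j_l≤n_l} ( a!/(j₁!⋯j_{r−1}!)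 ) · b₁^{j₁}⋯b_{r−1}^{j_{r−1}} · b_r^{−a−1} · Ĉ_{n₁−j₁, …, n_{r−1}−j_{r−1}, n_r+a+1}. -/
open Finset

/-- The quantity `Ĉ_{m₁,…,m_{r}}(x;b;y)` for `r = m + 1` factors. -/
noncomputable def Chat (m : ℕ) (b y : Fin (m + 1) → ℝ) (x : ℝ) (mv : Fin (m + 1) → ℕ) : ℝ :=
  (1 / ∏ l, ((mv l).factorial : ℝ)) *
    (∏ l, BPoly (mv l) (b l * x + y l) - ∏ l, BPoly (mv l) (y l))

/-- The right-hand side `T_{n₁,…,n_r}(x;b;y)` of the product-integral formula,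
for `r = m + 1` factors. -/
noncomputable def Tsum (m : ℕ) (n : Fin (m + 1) → ℕ) (b y : Fin (m + 1) → ℝ) (x : ℝ) : ℝ :=
  ∑ a ∈ Finset.range ((∑ l : Fin m, n l.castSucc) + 1), (-1 : ℝ) ^ a *
    ∑ j ∈ (Fintype.piFinset fun l : Fin m => Finset.range (n l.castSucc + 1)).filter
        (fun j => ∑ l, j l = a),
      ((a.factorial : ℝ) / ∏ l, ((j l).factorial : ℝ)) *
        (∏ l, b l.castSucc ^ j l) * b (Fin.last m) ^ (-(a : ℤ) - 1) *
        Chat m b y x (Fin.snoc (fun l : Fin m => n l.castSucc - j l) (n (Fin.last m) + a + 1))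

/-!
The polynomials `β_k = B_k(b X + y) / k!` satisfy `β_k' = b β_{k-1}`. Hence `b^{-a} β_{k+a}` is an
`a`-fold primitive of the last factor, while the `a`-th derivative of the product of the other
factors is given by the multinomial Leibniz rule and vanishes once `a` exceeds `n₁ + ⋯ + n_{r-1}`.
Repeated integration by parts therefore stops after finitely many steps and yields an explicit
antiderivative, whose increment over `[0, x]` is the stated sum.
-/

lemma cast_multinomial {K ι : Type*} [Semifield K] [CharZero K] (s : Finset ι) (j : ι → ℕ) :
    (Nat.multinomial s j : K) =
      ((∑ i ∈ s, j i).factorial : K) / ∏ i ∈ s, ((j i).factorial : K) := by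
  rw [← Nat.multinomial_spec, Nat.cast_mul, Nat.cast_prod, mul_div_cancel_left₀]
  exact prod_ne_zero_iff.mpr fun i _ ↦ Nat.cast_ne_zero.mpr (Nat.factorial_ne_zero _)

section Leibniz

open Polynomial

variable {R ι : Type*} [CommSemiring R] [DecidableEq ι]

lemma hasseDeriv_prod (s : Finset ι) (p : ι → R[X]) (a : ℕ) :
    hasseDeriv a (∏ i ∈ s, p i) = ∑ j ∈ piAntidiag s a, ∏ i ∈ s, hasseDeriv (j i) (p i) := by
  induction s using Finset.cons_induction generalizing a with
  | empty =>
    rcases a.eq_zero_or_pos with rfl | ha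
    · simp
    · simp [ha.ne', hasseDeriv_apply_one a ha]
  | cons i s hi ih =>
    rw [prod_cons, hasseDeriv_mul, piAntidiag_cons hi, sum_disjiUnion]
    refine sum_congr rfl fun k _ ↦ ?_
    rw [ih, mul_sum, sum_map]
    refine sum_congr rfl fun j hj ↦ ?_
    have hji : j i = 0 := by
      by_contra h
      exact hi ((mem_piAntidiag.mp hj).2 i h)
    have hne : ∀ l ∈ s, l ≠ i := fun l hl ↦ ne_of_mem_of_not_mem hl hi
    rw [prod_cons]
    congr 1
    · simp [hji]
    · exact prod_congr rfl fun l hl ↦ by simp [hne l hl]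

lemma iterate_derivative_prod (s : Finset ι) (p : ι → R[X]) (a : ℕ) :
    derivative^[a] (∏ i ∈ s, p i) =
      ∑ j ∈ piAntidiag s a, Nat.multinomial s j • ∏ i ∈ s, derivative^[j i] (p i) := by
  simp only [← factorial_smul_hasseDeriv, LinearMap.smul_apply, hasseDeriv_prod, smul_sum]
  refine sum_congr rfl fun j hj ↦ ?_
  rw [← (mem_piAntidiag.mp hj).1, ← Nat.multinomial_spec, prod_smul, smul_smul, mul_comm]

end Leibniz

/-- `A` is an Appell sequence rescaled by `b` and divided by factorials: a sequence `p` with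
`(p k)' = k p (k - 1)`, as in the classical definition, gives `A k = p k (b X + y) / k!`. The
initial term is only required to have zero derivative. -/
structure IsAppell {R : Type*} [CommSemiring R] (b : R) (A : ℕ → Polynomial R) : Prop where
  derivative_zero : (A 0).derivative = 0
  derivative_succ : ∀ k, (A (k + 1)).derivative = b • A k

namespace IsAppell

open Polynomial

section Iterate

variable {R : Type*} [CommSemiring R] {b : R} {A : ℕ → R[X]}

lemma iterate_derivative_add (hA : IsAppell b A) (k j : ℕ) :
    derivative^[j] (A (k + j)) = b ^ j • A k := by
  induction j with
  | zero => simp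
  | succ j ih =>
    rw [Function.iterate_succ_apply, ← add_assoc, hA.derivative_succ, iterate_derivative_smul, ih,
      smul_smul, pow_succ']

lemma iterate_derivative_of_le (hA : IsAppell b A) {k j : ℕ} (h : j ≤ k) :
    derivative^[j] (A k) = b ^ j • A (k - j) := by
  rw [← hA.iterate_derivative_add, Nat.sub_add_cancel h]

lemma iterate_derivative_of_lt (hA : IsAppell b A) {k j : ℕ} (h : k < j) :
    derivative^[j] (A k) = 0 := by
  obtain ⟨i, rfl⟩ := Nat.exists_eq_add_of_lt h
  have hk : derivative^[k] (A k) = b ^ k • A 0 := by simpa using hA.iterate_derivative_add 0 k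
  rw [show k + i + 1 = i + 1 + k by ring, Function.iterate_add_apply, hk, iterate_derivative_smul,
    Function.iterate_succ_apply, hA.derivative_zero, iterate_derivative_zero, smul_zero]

end Iterate

section Prod

variable {R ι : Type*} [CommSemiring R] [Fintype ι]
  {b : ι → R} {A : ι → ℕ → R[X]}

lemma iterate_derivative_prod [DecidableEq ι] (hA : ∀ i, IsAppell (b i) (A i)) (n : ι → ℕ) (a : ℕ) :
    derivative^[a] (∏ i, A i (n i)) =
      ∑ j ∈ (Fintype.piFinset fun i ↦ range (n i + 1)).filter (fun j ↦ ∑ i, j i = a),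
        Nat.multinomial univ j • (∏ i, b i ^ j i) • ∏ i, A i (n i - j i) := by
  rw [_root_.iterate_derivative_prod]
  symm
  refine sum_subset_zero_on_sdiff (fun j hj ↦ by simp_all) (fun j hj ↦ ?_) fun j hj ↦ ?_
  · obtain ⟨i, hi⟩ : ∃ i, n i < j i := by
      by_contra! hle
      simp_all
    rw [prod_eq_zero (mem_univ i) ((hA i).iterate_derivative_of_lt hi), smul_zero]
  · have hle : ∀ i, j i ≤ n i := by simp_all
    rw [← prod_smul, prod_congr rfl fun i _ ↦ (hA i).iterate_derivative_of_le (hle i)]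

lemma iterate_derivative_prod_of_lt (hA : ∀ i, IsAppell (b i) (A i)) {n : ι → ℕ} {a : ℕ}
    (ha : ∑ i, n i < a) : derivative^[a] (∏ i, A i (n i)) = 0 := by
  classical
  rw [iterate_derivative_prod hA]
  refine sum_eq_zero fun j hj ↦ ?_
  simp only [mem_filter, Fintype.mem_piFinset, mem_range, Nat.lt_succ_iff] at hj
  have hle : ∑ i, j i ≤ ∑ i, n i := sum_le_sum fun i _ ↦ hj.1 i
  exact absurd ha (hj.2 ▸ hle).not_gt

end Prod

lemma derivative_zpow_smul {K : Type*} [Field K] {b : K} {A : ℕ → K[X]} (hA : IsAppell b A)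
    (hb : b ≠ 0) (k a : ℕ) :
    derivative (b ^ (-((a + 1 : ℕ) : ℤ)) • A (k + (a + 1))) = b ^ (-(a : ℤ)) • A (k + a) := by
  rw [derivative_smul, ← add_assoc, hA.derivative_succ, smul_smul, ← zpow_add_one₀ hb]
  congr 2
  push_cast
  ring

end IsAppell

section ByParts

open Polynomial

variable {R : Type*} [CommRing R]

/-- The antiderivative `∑_{a ≤ N} (-1)^a p⁽ᵃ⁾ q_{a+1}` of `p q₀` produced by `N + 1` integrations
by parts, where `q_{a+1}` is a primitive of `q_a` and `p` has vanishing `(N + 1)`-st derivative. -/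
noncomputable def byPartsPrimitive (N : ℕ) (p : R[X]) (q : ℕ → R[X]) : R[X] :=
  ∑ a ∈ range (N + 1), (-1) ^ a * (derivative^[a] p * q (a + 1))

lemma derivative_byPartsPrimitive {N : ℕ} {p : R[X]} {q : ℕ → R[X]}
    (hp : derivative^[N + 1] p = 0) (hq : ∀ a, derivative (q (a + 1)) = q a) :
    derivative (byPartsPrimitive N p q) = p * q 0 := by
  let t (a : ℕ) : R[X] := (-1) ^ a * (derivative^[a] p * q a)
  have htelescope (a : ℕ) :
      derivative ((-1) ^ a * (derivative^[a] p * q (a + 1))) = t a - t (a + 1) := by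
    have hsign : derivative ((-1 : R[X]) ^ a) = 0 := by simp [derivative_pow]
    rw [derivative_mul, derivative_mul, hsign, hq, ← Function.iterate_succ_apply' derivative]
    ring
  calc derivative (byPartsPrimitive N p q)
      = ∑ a ∈ range (N + 1), (t a - t (a + 1)) := by
        rw [byPartsPrimitive, derivative_sum, sum_congr rfl fun a _ ↦ htelescope a]
    _ = t 0 - t (N + 1) := sum_range_sub' t (N + 1)
    _ = p * q 0 := by simp [t, hp]

end ByParts

section Bernoulli

open Polynomial

/-- The polynomial `B_k(b X + y) / k!`, normalized so that differentiation lowers `k` by one and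
multiplies by `b`. -/
noncomputable def affineBernoulli {R : Type*} [CommSemiring R] [Algebra ℚ R] (b y : R) (k : ℕ) :
    R[X] :=
  (((k.factorial : ℚ)⁻¹ • Polynomial.bernoulli k).map (algebraMap ℚ R)).comp (C b * X + C y)

lemma isAppell_affineBernoulli {R : Type*} [CommSemiring R] [Algebra ℚ R] (b y : R) :
    IsAppell b (affineBernoulli b y) where
  derivative_zero := by simp [affineBernoulli]
  derivative_succ k := by
    have hderiv : derivative (((k + 1).factorial : ℚ)⁻¹ • Polynomial.bernoulli (k + 1)) =
        (k.factorial : ℚ)⁻¹ • Polynomial.bernoulli k := by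
      rw [derivative_smul, derivative_bernoulli_add_one, ← Nat.cast_succ, ← nsmul_eq_mul,
        ← Nat.cast_smul_eq_nsmul ℚ, smul_smul, Nat.factorial_succ]
      congr 1
      push_cast
      field_simp
    rw [affineBernoulli, derivative_comp, derivative_map, hderiv, affineBernoulli, smul_eq_C_mul b]
    simp

section Primitive

variable {K : Type*} [Field K] [Algebra ℚ K] {m : ℕ} (b y : Fin (m + 1) → K)

/-- The antiderivative of `∏ l, B_{n l}(b l X + y l) / (n l)!` obtained by repeatedly integrating
the last factor and differentiating the product of the others. -/
noncomputable def prodBernoulliPrimitive (n : Fin (m + 1) → ℕ) : K[X] :=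
  byPartsPrimitive (∑ l : Fin m, n l.castSucc)
    (∏ l : Fin m, affineBernoulli (b l.castSucc) (y l.castSucc) (n l.castSucc))
    fun a ↦ b (Fin.last m) ^ (-(a : ℤ)) •
      affineBernoulli (b (Fin.last m)) (y (Fin.last m)) (n (Fin.last m) + a)

lemma derivative_prodBernoulliPrimitive (hb : b (Fin.last m) ≠ 0) (n : Fin (m + 1) → ℕ) :
    derivative (prodBernoulliPrimitive b y n) = ∏ l, affineBernoulli (b l) (y l) (n l) := by
  rw [prodBernoulliPrimitive, derivative_byPartsPrimitive, Fin.prod_univ_castSucc]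
  · simp
  · exact IsAppell.iterate_derivative_prod_of_lt
      (fun l : Fin m ↦ isAppell_affineBernoulli (b l.castSucc) (y l.castSucc)) (Nat.lt_succ_self _)
  · exact (isAppell_affineBernoulli _ _).derivative_zpow_smul hb _

lemma eval_prodBernoulliPrimitive (n : Fin (m + 1) → ℕ) (z : K) :
    (prodBernoulliPrimitive b y n).eval z =
      ∑ a ∈ range ((∑ l : Fin m, n l.castSucc) + 1), (-1 : K) ^ a *
        ∑ j ∈ (Fintype.piFinset fun l : Fin m ↦ range (n l.castSucc + 1)).filter
            (fun j ↦ ∑ l, j l = a),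
          ((a.factorial : K) / ∏ l, ((j l).factorial : K)) *
            (∏ l, b l.castSucc ^ j l) * b (Fin.last m) ^ (-(a : ℤ) - 1) *
            (∏ l, affineBernoulli (b l) (y l)
              ((Fin.snoc (fun l : Fin m ↦ n l.castSucc - j l) (n (Fin.last m) + a + 1) :
                Fin (m + 1) → ℕ) l)).eval z := by
  have := algebraRat.charZero K
  rw [prodBernoulliPrimitive, byPartsPrimitive, eval_finsetSum]
  refine sum_congr rfl fun a _ ↦ ?_
  rw [IsAppell.iterate_derivative_prod
    fun l : Fin m ↦ isAppell_affineBernoulli (b l.castSucc) (y l.castSucc)]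
  simp only [eval_mul, eval_pow, eval_neg, eval_one, eval_finsetSum, sum_mul]
  congr 1
  refine sum_congr rfl fun j hj ↦ ?_
  have hexp : -((a + 1 : ℕ) : ℤ) = -(a : ℤ) - 1 := by push_cast; ring
  rw [← (mem_filter.mp hj).2, ← cast_multinomial, (mem_filter.mp hj).2, hexp]
  simp only [Fin.prod_univ_castSucc, Fin.snoc_castSucc, Fin.snoc_last, eval_mul, eval_smul,
    smul_eq_mul, nsmul_eq_mul, eval_natCast, ← add_assoc]
  ring

end Primitive

lemma eval_affineBernoulli (b y : ℝ) (k : ℕ) (z : ℝ) :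
    (affineBernoulli b y k).eval z = BPoly k (b * z + y) / k.factorial := by
  simp [affineBernoulli, BPoly, div_eq_inv_mul]

lemma eval_prod_affineBernoulli {ι : Type*} (s : Finset ι) (b y : ι → ℝ) (k : ι → ℕ) (z : ℝ) :
    (∏ i ∈ s, affineBernoulli (b i) (y i) (k i)).eval z =
      (1 / ∏ i ∈ s, ((k i).factorial : ℝ)) * ∏ i ∈ s, BPoly (k i) (b i * z + y i) := by
  simp only [eval_prod, eval_affineBernoulli, prod_div_distrib, one_div_mul_eq_div]

variable {m : ℕ} (b y : Fin (m + 1) → ℝ)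

lemma Chat_eq_eval_sub_eval (x : ℝ) (k : Fin (m + 1) → ℕ) :
    Chat m b y x k =
      (∏ l, affineBernoulli (b l) (y l) (k l)).eval x -
        (∏ l, affineBernoulli (b l) (y l) (k l)).eval 0 := by
  simp only [eval_prod_affineBernoulli, Chat, mul_zero, zero_add, mul_sub]

lemma Tsum_eq_eval_sub_eval (n : Fin (m + 1) → ℕ) (x : ℝ) :
    Tsum m n b y x =
      (prodBernoulliPrimitive b y n).eval x - (prodBernoulliPrimitive b y n).eval 0 := by
  simp only [eval_prodBernoulliPrimitive, ← sum_sub_distrib, ← mul_sub, Tsum,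
    Chat_eq_eval_sub_eval]

end Bernoulli

lemma intervalIntegral_eval_derivative (p : Polynomial ℝ) (u v : ℝ) :
    ∫ z in u..v, p.derivative.eval z = p.eval v - p.eval u :=
  intervalIntegral.integral_eq_sub_of_hasDerivAt (fun z _ ↦ p.hasDerivAt z)
    (p.derivative.continuous.intervalIntegrable u v)

/-- The integral of a product of `r = m+1` Bernoulli polynomials `B_{n_l}(b_l z + y_l)`
over `[0,x]` (Proposition 4.3). -/
theorem integral_prod_bernoulli (m : ℕ) (n : Fin (m + 1) → ℕ) (b y : Fin (m + 1) → ℝ)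
    (hb : ∀ l, b l ≠ 0) (x : ℝ) :
    (1 / ∏ l, ((n l).factorial : ℝ)) *
        ∫ z in (0 : ℝ)..x, ∏ l, BPoly (n l) (b l * z + y l) =
      Tsum m n b y x := by
  calc (1 / ∏ l, ((n l).factorial : ℝ)) * ∫ z in (0 : ℝ)..x, ∏ l, BPoly (n l) (b l * z + y l)
      = ∫ z in (0 : ℝ)..x, (∏ l, affineBernoulli (b l) (y l) (n l)).eval z := by
        simp only [eval_prod_affineBernoulli, intervalIntegral.integral_const_mul]
    _ = ∫ z in (0 : ℝ)..x, (prodBernoulliPrimitive b y n).derivative.eval z := by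
        rw [derivative_prodBernoulliPrimitive b y (hb _)]
    _ = (prodBernoulliPrimitive b y n).eval x - (prodBernoulliPrimitive b y n).eval 0 :=
        intervalIntegral_eval_derivative _ 0 x
    _ = Tsum m n b y x := (Tsum_eq_eval_sub_eval b y n x).symm
end

section
/- Let n, m ≥ 0 be integers, let b₁, b₂ be nonzero real numbers, and let x, y₁, y₂ be real numbers. Then Σ_{a=0}^{n} (−1)^a·C(m+n+1, n−a)·b₁^a·b₂^{−a−1}·B_{n−a}(b₁x+y₁)·B_{m+a+1}(b₂x+y₂) − Σ_{a=0}^{m} (−1)^a·C(m+n+1, m−a)·b₂^a·b₁^{−a−1}·B_{m−a}(b₂x+y₂)·B_{n+a+1}(b₁x+y₁) = ((−1)^{m+1}/(b₁^{m+1}·b₂^{n+1})) · Σ_{a=0}^{m+n+1} (−1)^a·C(m+n+1, a)·b₁^a·b₂^{m+n+1−a}·B_{m+n+1−a}(y₁)·B_a(y₂). -/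
open Finset

/-!
For Appell sequences `p` and `q`, the sequences `i ↦ b₂ ^ i * p i (b₁ x + y₁)` and
`j ↦ b₁ ^ j * q j (b₂ x + y₂)` both satisfy `f n' = b₁ b₂ n f (n - 1)`. The derivative in `x` of
their alternating binomial convolution therefore telescopes to zero, so its value at `x` is its
value at `0`. Cutting the sum of order `m + n + 1` between the indices `m` and `m + 1` and
counting both pieces from the cut turns it into the difference of the two sums in the reciprocity.
-/

section AltBinomConv

variable {R S : Type*} [CommRing R] [CommRing S]

/-- The alternating binomial convolution of two sequences: the `N`-th coefficient of the product of
the exponential generating functions of `p` at `t` and of `q` at `-t`, times `N!`. -/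
def altBinomConv (p q : ℕ → R) (N : ℕ) : R :=
  ∑ a ∈ range (N + 1), (-1) ^ a * (N.choose a : R) * p (N - a) * q a

theorem map_altBinomConv (f : R →+* S) (p q : ℕ → R) (N : ℕ) :
    f (altBinomConv p q N) = altBinomConv (fun i ↦ f (p i)) (fun j ↦ f (q j)) N := by
  simp [altBinomConv]

theorem altBinomConv_add_add_one (p q : ℕ → R) (m n : ℕ) :
    altBinomConv p q (m + n + 1) =
      (-1) ^ (m + 1) *
        ((∑ a ∈ range (n + 1),
            (-1) ^ a * ((m + n + 1).choose (n - a) : R) * p (n - a) * q (m + a + 1)) -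
          ∑ a ∈ range (m + 1),
            (-1) ^ a * ((m + n + 1).choose (m - a) : R) * q (m - a) * p (n + a + 1)) := by
  rw [altBinomConv, show m + n + 1 + 1 = (m + 1) + (n + 1) by ring, sum_range_add, add_comm,
    mul_sub, sub_eq_add_neg, mul_sum, mul_sum, ← sum_neg_distrib]
  congr 1
  · refine sum_congr rfl fun a ha ↦ ?_
    have ha : a ≤ n := mem_range_succ_iff.mp ha
    have hchoose : (m + n + 1).choose (m + 1 + a) = (m + n + 1).choose (n - a) :=
      Nat.choose_symm_of_eq_add (by lia)
    rw [hchoose, show m + n + 1 - (m + 1 + a) = n - a by lia, show m + 1 + a = m + a + 1 by lia]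
    ring
  · rw [← sum_range_reflect]
    refine sum_congr rfl fun a ha ↦ ?_
    have ha : a ≤ m := mem_range_succ_iff.mp ha
    have hsign : (-1 : R) ^ (m - a) = -((-1) ^ (m + 1) * (-1) ^ a) := by
      obtain ⟨d, rfl⟩ := Nat.exists_eq_add_of_le ha
      rw [Nat.add_sub_cancel_left, ← pow_add, show a + d + 1 + a = d + 1 + 2 * a by ring, pow_add,
        pow_mul]
      simp [pow_succ]
    rw [show m + 1 - 1 - a = m - a by lia, show m + n + 1 - (m - a) = n + a + 1 by lia, hsign]
    ring

theorem sum_sub_sum_eq_altBinomConv {K : Type*} [Field K] {b₁ b₂ : K} (hb₁ : b₁ ≠ 0) (hb₂ : b₂ ≠ 0)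
    (u v : ℕ → K) (m n : ℕ) :
    (∑ a ∈ range (n + 1), (-1) ^ a * ((m + n + 1).choose (n - a) : K) *
        b₁ ^ a * b₂ ^ (-(a : ℤ) - 1) * u (n - a) * v (m + a + 1)) -
      (∑ a ∈ range (m + 1), (-1) ^ a * ((m + n + 1).choose (m - a) : K) *
        b₂ ^ a * b₁ ^ (-(a : ℤ) - 1) * v (m - a) * u (n + a + 1)) =
      (-1) ^ (m + 1) / (b₁ ^ (m + 1) * b₂ ^ (n + 1)) *
        altBinomConv (fun i ↦ b₂ ^ i * u i) (fun j ↦ b₁ ^ j * v j) (m + n + 1) := by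
  have zpow_eq_div {b : K} (hb : b ≠ 0) {a k : ℕ} (hak : a ≤ k) :
      b ^ (-(a : ℤ) - 1) = b ^ (k - a) / b ^ (k + 1) := by
    rw [← zpow_natCast, ← zpow_natCast, ← zpow_sub₀ hb]
    congr 1
    lia
  have sign_mul_self : (-1 : K) ^ (m + 1) * (-1) ^ (m + 1) = 1 := by
    rw [← mul_pow]
    simp
  rw [altBinomConv_add_add_one, div_mul_eq_mul_div, ← mul_assoc, sign_mul_self, one_mul, sub_div,
    sum_div, sum_div]
  congr 1 <;> refine sum_congr rfl fun a ha ↦ ?_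
  · rw [zpow_eq_div hb₂ (mem_range_succ_iff.mp ha)]
    field_simp
    ring
  · rw [zpow_eq_div hb₁ (mem_range_succ_iff.mp ha)]
    field_simp
    ring

end AltBinomConv

section Appell

open Polynomial

variable {R S : Type*} [CommRing R] [CommRing S]

/-- `p` is an Appell sequence with multiplier `c`, i.e. `p n' = c n p (n - 1)`; the classical notion
is the case `c = 1`. No condition is put on the degree of `p n`, and for `n = 0` the equation says
that the derivative of `p 0` vanishes. -/
def IsAppell_s13 (c : R) (p : ℕ → R[X]) : Prop :=
  ∀ n, derivative (p n) = C c * (n * p (n - 1))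

theorem isAppell_bernoulli : IsAppell_s13 1 Polynomial.bernoulli := fun n ↦ by
  rw [derivative_bernoulli, C_1, one_mul]

namespace IsAppell_s13

variable {c : R} {p q : ℕ → R[X]}

theorem map (hp : IsAppell_s13 c p) (f : R →+* S) : IsAppell_s13 (f c) fun n ↦ (p n).map f := fun n ↦ by
  simp [derivative_map, hp n]

theorem comp_affine (hp : IsAppell_s13 c p) (b y : R) :
    IsAppell_s13 (b * c) fun n ↦ (p n).comp (C b * X + C y) := fun n ↦ by
  simp [derivative_comp, hp n, mul_assoc]

theorem C_pow_mul (hp : IsAppell_s13 c p) (b : R) :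
    IsAppell_s13 (b * c) fun n ↦ C (b ^ n) * p n := by
  rintro (_ | n)
  · simp [hp 0]
  · rw [derivative_C_mul, hp (n + 1), Nat.add_sub_cancel, pow_succ, C_mul, C_mul]
    ring

theorem derivative_altBinomConv (hp : IsAppell_s13 c p) (hq : IsAppell_s13 c q) (N : ℕ) :
    derivative (altBinomConv p q N) = 0 := by
  let G (a : ℕ) : R[X] := (-1) ^ a * (N.choose a * a) * p (N - a) * q (a - 1)
  have derivative_term (a : ℕ) :
      derivative ((-1) ^ a * (N.choose a : R[X]) * p (N - a) * q a) = C c * (G a - G (a + 1)) := by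
    have hsign : derivative ((-1 : R[X]) ^ a) = 0 := by simp [derivative_pow]
    have hchoose : (N.choose (a + 1) : R[X]) * (a + 1 : ℕ) = N.choose a * (N - a : ℕ) := by
      rw [← Nat.cast_mul, Nat.choose_succ_right_eq, Nat.cast_mul]
    simp only [G, derivative_mul, hsign, derivative_natCast, hp (N - a), hq a, hchoose,
      Nat.sub_sub, Nat.add_sub_cancel]
    ring
  calc derivative (altBinomConv p q N)
      = ∑ a ∈ range (N + 1), C c * (G a - G (a + 1)) := by
        rw [altBinomConv, derivative_sum]
        exact sum_congr rfl fun a _ ↦ derivative_term a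
    _ = C c * (G 0 - G (N + 1)) := by rw [← mul_sum, sum_range_sub']
    _ = 0 := by simp [G]

theorem altBinomConv_eval_eq [IsAddTorsionFree R] (hp : IsAppell_s13 c p) (hq : IsAppell_s13 c q)
    (N : ℕ) (x x' : R) :
    altBinomConv (fun i ↦ (p i).eval x) (fun j ↦ (q j).eval x) N =
      altBinomConv (fun i ↦ (p i).eval x') (fun j ↦ (q j).eval x') N := by
  have eval_eq (z : R) : altBinomConv (fun i ↦ (p i).eval z) (fun j ↦ (q j).eval z) N =
      (altBinomConv p q N).eval z := (map_altBinomConv (evalRingHom z) p q N).symm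
  rw [eval_eq, eval_eq, eq_C_of_derivative_eq_zero (hp.derivative_altBinomConv hq N), eval_C,
    eval_C]

theorem altBinomConv_eval_affine [IsAddTorsionFree R] (hp : IsAppell_s13 c p) (hq : IsAppell_s13 c q)
    (N : ℕ) (b₁ b₂ x y₁ y₂ : R) :
    altBinomConv (fun i ↦ b₂ ^ i * (p i).eval (b₁ * x + y₁))
        (fun j ↦ b₁ ^ j * (q j).eval (b₂ * x + y₂)) N =
      altBinomConv (fun i ↦ b₂ ^ i * (p i).eval y₁) (fun j ↦ b₁ ^ j * (q j).eval y₂) N := by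
  have hP := (hp.comp_affine b₁ y₁).C_pow_mul b₂
  have hQ := (hq.comp_affine b₂ y₂).C_pow_mul b₁
  rw [mul_left_comm] at hQ
  simpa using hP.altBinomConv_eval_eq hQ N x 0

end IsAppell_s13

theorem bernoulli_reciprocity_general {K : Type*} [Field K] [CharZero K] {c : K} {p q : ℕ → K[X]}
    (hp : IsAppell_s13 c p) (hq : IsAppell_s13 c q) (n m : ℕ) {b₁ b₂ : K} (hb₁ : b₁ ≠ 0) (hb₂ : b₂ ≠ 0)
    (x y₁ y₂ : K) :
    (∑ a ∈ range (n + 1), (-1 : K) ^ a * ((m + n + 1).choose (n - a) : K) *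
        b₁ ^ a * b₂ ^ (-(a : ℤ) - 1) * (p (n - a)).eval (b₁ * x + y₁) *
        (q (m + a + 1)).eval (b₂ * x + y₂)) -
      (∑ a ∈ range (m + 1), (-1 : K) ^ a * ((m + n + 1).choose (m - a) : K) *
        b₂ ^ a * b₁ ^ (-(a : ℤ) - 1) * (q (m - a)).eval (b₂ * x + y₂) *
        (p (n + a + 1)).eval (b₁ * x + y₁)) =
      ((-1 : K) ^ (m + 1) / (b₁ ^ (m + 1) * b₂ ^ (n + 1))) *
        ∑ a ∈ range (m + n + 2), (-1 : K) ^ a * ((m + n + 1).choose a : K) *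
          b₁ ^ a * b₂ ^ (m + n + 1 - a) * (p (m + n + 1 - a)).eval y₁ * (q a).eval y₂ := by
  rw [sum_sub_sum_eq_altBinomConv hb₁ hb₂ (fun i ↦ (p i).eval (b₁ * x + y₁))
    (fun j ↦ (q j).eval (b₂ * x + y₂)), hp.altBinomConv_eval_affine hq, altBinomConv]
  congr 1
  exact sum_congr rfl fun a _ ↦ by ring

end Appell

/-- Reciprocity relation for Bernoulli polynomials (Corollary 1.4). -/
theorem bernoulli_reciprocity (n m : ℕ) (b₁ b₂ : ℝ) (hb₁ : b₁ ≠ 0) (hb₂ : b₂ ≠ 0)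
    (x y₁ y₂ : ℝ) :
    (∑ a ∈ Finset.range (n + 1), (-1 : ℝ) ^ a * (Nat.choose (m + n + 1) (n - a) : ℝ) *
        b₁ ^ a * b₂ ^ (-(a : ℤ) - 1) * BPoly (n - a) (b₁ * x + y₁) * BPoly (m + a + 1) (b₂ * x + y₂))
      - (∑ a ∈ Finset.range (m + 1), (-1 : ℝ) ^ a * (Nat.choose (m + n + 1) (m - a) : ℝ) *
        b₂ ^ a * b₁ ^ (-(a : ℤ) - 1) * BPoly (m - a) (b₂ * x + y₂) * BPoly (n + a + 1) (b₁ * x + y₁)) =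
      ((-1 : ℝ) ^ (m + 1) / (b₁ ^ (m + 1) * b₂ ^ (n + 1))) *
        ∑ a ∈ Finset.range (m + n + 2), (-1 : ℝ) ^ a * (Nat.choose (m + n + 1) a : ℝ) *
          b₁ ^ a * b₂ ^ (m + n + 1 - a) * BPoly (m + n + 1 - a) y₁ * BPoly a y₂ :=
  bernoulli_reciprocity_general (isAppell_bernoulli.map _) (isAppell_bernoulli.map _) n m
    hb₁ hb₂ x y₁ y₂
end

section
/- Let n, m ≥ 0 be integers and let x, y₁, y₂ be real numbers. Then Σ_{a=0}^{n} (−1)^a·C(m+n+1, n−a)·B_{n−a}(x+y₁)·B_{m+a+1}(x+y₂) − Σ_{a=0}^{m} (−1)^a·C(m+n+1, m−a)·B_{m−a}(x+y₂)·B_{n+a+1}(x+y₁) = (−1)^m·(m+n+1)·(y₂−y₁)·B_{m+n}(y₁−y₂) + (−1)^m·(m+n)·B_{m+n+1}(y₁−y₂). -/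
open Finset

/-!
Write `β = X / (e^X - 1)`, so that `∑ Bₙ(t) Xⁿ/n! = β e^{tX}`. Differentiating `β (e^X - 1) = X`
gives Euler's identity `β² = (1 - X) β - X β'`; multiplying it by `e^{(a+b)X}` evaluates the
binomial convolution of `Bₖ(a)` with `Bₗ(b)`. Taking `a = 1 - u`, `b = v` and using
`Bₖ(1 - u) = (-1)ᵏ Bₖ(u)` makes this convolution alternating, and the two sums of the reciprocity
formula are, up to the sign `(-1)ⁿ`, its terms with `k ≤ n` and with `k > n`.
-/

theorem sum_antidiagonal_add_add_one {M : Type*} [AddCommMonoid M] (f : ℕ → ℕ → M) (n m : ℕ) :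
    ∑ p ∈ antidiagonal (m + n + 1), f p.1 p.2 =
      ∑ a ∈ range (n + 1), f (n - a) (m + a + 1) + ∑ a ∈ range (m + 1), f (n + a + 1) (m - a) := by
  rw [Nat.sum_antidiagonal_eq_sum_range_succ, Nat.succ_eq_add_one,
    show m + n + 1 + 1 = n + 1 + (m + 1) by ring, sum_range_add, ← sum_range_reflect _ (n + 1)]
  congr 1 <;> refine sum_congr rfl fun a ha => ?_ <;> rw [mem_range] at ha <;> congr 1 <;> lia

theorem neg_one_pow_mul_sum_antidiagonal {R : Type*} [Ring R] (f : ℕ → ℕ → R) (n m : ℕ) :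
    (-1) ^ n * ∑ p ∈ antidiagonal (m + n + 1), (-1) ^ p.1 * f p.1 p.2 =
      ∑ a ∈ range (n + 1), (-1) ^ a * f (n - a) (m + a + 1) -
        ∑ a ∈ range (m + 1), (-1) ^ a * f (n + a + 1) (m - a) := by
  rw [sum_antidiagonal_add_add_one fun k l => (-1) ^ k * f k l, mul_add, mul_sum, mul_sum,
    sub_eq_add_neg, ← sum_neg_distrib]
  congr 1 <;> refine sum_congr rfl fun a ha => ?_
  · have hexp : n + (n - a) = 2 * (n - a) + a := by rw [mem_range] at ha; lia
    rw [← mul_assoc, ← pow_add, hexp, pow_add, pow_mul, neg_one_sq, one_pow, one_mul]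
  · have hexp : n + (n + a + 1) = 2 * n + a + 1 := by ring
    rw [← mul_assoc, ← pow_add, hexp, pow_succ, pow_add, pow_mul, neg_one_sq, one_pow, one_mul,
      mul_neg_one, neg_mul]

section ExpGenFun

open PowerSeries
open scoped Nat

section Semiring

variable {A : Type*} [Semiring A] [Algebra ℚ A]

/-- The exponential generating function `∑ fₙ Xⁿ / n!` of a sequence `f`, bundled as a linear map
so that linear relations between sequences and between power series can be exchanged. -/
noncomputable def expGenFun : (ℕ → A) →ₗ[A] A⟦X⟧ where
  toFun f := PowerSeries.mk fun n => (n ! : ℚ)⁻¹ • f n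
  map_add' f g := by ext n; simp
  map_smul' c f := by ext n; simp

theorem coeff_expGenFun (f : ℕ → A) (n : ℕ) : coeff n (expGenFun f) = (n ! : ℚ)⁻¹ • f n :=
  coeff_mk n fun k => (k ! : ℚ)⁻¹ • f k

theorem expGenFun_injective : Function.Injective (expGenFun : (ℕ → A) → A⟦X⟧) := by
  intro f g h
  funext n
  have hcoeff := congrArg (fun F => (n ! : ℚ) • coeff n F) h
  have hn : (n ! : ℚ) ≠ 0 := Nat.cast_ne_zero.2 n.factorial_ne_zero
  simpa only [coeff_expGenFun, smul_inv_smul₀ hn] using hcoeff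

theorem inv_factorial_succ_smul_mul (n : ℕ) (a : A) :
    ((n + 1)! : ℚ)⁻¹ • (((n + 1 : ℕ) : A) * a) = (n ! : ℚ)⁻¹ • a := by
  rw [← nsmul_eq_mul, ← Nat.cast_smul_eq_nsmul ℚ, smul_smul, Nat.factorial_succ, Nat.cast_mul,
    mul_inv_rev, inv_mul_cancel_right₀ (Nat.cast_ne_zero.2 n.succ_ne_zero)]

theorem X_mul_expGenFun (f : ℕ → A) :
    X * expGenFun f = expGenFun fun n => (n : A) * f (n - 1) := by
  ext n
  cases n with
  | zero => simp [coeff_expGenFun]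
  | succ n =>
    rw [coeff_succ_X_mul, coeff_expGenFun, coeff_expGenFun, inv_factorial_succ_smul_mul,
      Nat.add_sub_cancel]

theorem expGenFun_mul (f g : ℕ → A) :
    expGenFun f * expGenFun g =
      expGenFun fun n => ∑ p ∈ antidiagonal n, (n.choose p.1 : A) * f p.1 * g p.2 := by
  ext n
  rw [PowerSeries.coeff_mul, coeff_expGenFun, smul_sum]
  refine sum_congr rfl fun p hp => ?_
  have hchoose : (n ! : ℚ)⁻¹ * n.choose p.1 = (p.1 ! : ℚ)⁻¹ * (p.2 ! : ℚ)⁻¹ := by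
    rw [← mem_antidiagonal.1 hp, Nat.cast_add_choose]
    field_simp
  rw [coeff_expGenFun, coeff_expGenFun, smul_mul_smul_comm, ← hchoose, mul_assoc, ← nsmul_eq_mul,
    ← Nat.cast_smul_eq_nsmul ℚ, smul_smul]

end Semiring

section CommSemiring

variable {A : Type*} [CommSemiring A] [Algebra ℚ A]

theorem derivative_expGenFun (f : ℕ → A) :
    d⁄dX A (expGenFun f) = expGenFun fun n => f (n + 1) := by
  ext n
  rw [coeff_derivative, coeff_expGenFun, coeff_expGenFun, ← inv_factorial_succ_smul_mul n,
    ← mul_smul_comm, mul_comm, Nat.cast_succ]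

theorem X_mul_derivative_expGenFun (f : ℕ → A) :
    X * d⁄dX A (expGenFun f) = expGenFun fun n => (n : A) * f n := by
  rw [derivative_expGenFun, X_mul_expGenFun]
  congr 1
  funext n
  cases n with
  | zero => simp only [Nat.cast_zero, zero_mul]
  | succ n => rw [Nat.add_sub_cancel]

end CommSemiring

end ExpGenFun

section Bernoulli

open PowerSeries
open Polynomial (aeval aeval_comp)

theorem aeval_bernoulli_one_sub {A : Type*} [Ring A] [Algebra ℚ A] (n : ℕ) (t : A) :
    aeval (1 - t) (Polynomial.bernoulli n) = (-1) ^ n * aeval t (Polynomial.bernoulli n) := by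
  simpa [aeval_comp] using congrArg (aeval t) (Polynomial.bernoulli_comp_one_sub_X n)

variable {A : Type*} [CommRing A] [Algebra ℚ A]

theorem derivative_rescale_exp (c : A) :
    d⁄dX A (rescale c (exp A)) = C c * rescale c (exp A) := by
  have hexp : rescale c (exp A) = expGenFun fun n => c ^ n := by
    ext n
    rw [coeff_rescale, coeff_exp, coeff_expGenFun, Algebra.smul_def, mul_comm, one_div]
  rw [hexp, derivative_expGenFun, ← smul_eq_C_mul, ← map_smul]
  simp only [pow_succ', Pi.smul_def, smul_eq_mul]

theorem bernoulliPowerSeries_sq :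
    bernoulliPowerSeries A ^ 2 =
      (1 - X) * bernoulliPowerSeries A - X * d⁄dX A (bernoulliPowerSeries A) := by
  set β := bernoulliPowerSeries A
  have hβ : β * (exp A - 1) = X := bernoulliPowerSeries_mul_exp_sub_one A
  have hderiv : β * exp A + (exp A - 1) * d⁄dX A β = 1 := by
    simpa only [Derivation.leibniz, map_sub, derivative_exp, derivative_one, sub_zero, smul_eq_mul,
      derivative_X] using congrArg (d⁄dX A) hβ
  linear_combination β * hderiv - (β + d⁄dX A β) * hβ

theorem bernoulliPowerSeries_sq_mul_rescale_exp (c : A) :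
    bernoulliPowerSeries A ^ 2 * rescale c (exp A) =
      bernoulliPowerSeries A * rescale c (exp A)
        - X * d⁄dX A (bernoulliPowerSeries A * rescale c (exp A))
        + (c - 1) • (X * (bernoulliPowerSeries A * rescale c (exp A))) := by
  rw [Derivation.leibniz, derivative_rescale_exp, smul_eq_mul, smul_eq_mul, smul_eq_C_mul, map_sub,
    map_one]
  linear_combination rescale c (exp A) * bernoulliPowerSeries_sq (A := A)

theorem expGenFun_bernoulli (t : A) :
    expGenFun (fun n => aeval t (Polynomial.bernoulli n)) =
      bernoulliPowerSeries A * rescale t (exp A) := by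
  set F := expGenFun fun n => aeval t (Polynomial.bernoulli n)
  have hF : F * (exp A - 1) = X * rescale t (exp A) := by
    rw [← Polynomial.bernoulli_generating_function t]
    congr 1
    ext n
    rw [coeff_expGenFun, coeff_mk, map_smul, one_div]
  apply X_mul_cancel
  linear_combination bernoulliPowerSeries A * hF - F * bernoulliPowerSeries_mul_exp_sub_one A

theorem sum_antidiagonal_choose_mul_bernoulli (a b : A) (N : ℕ) :
    ∑ p ∈ antidiagonal N, (N.choose p.1 : A) * aeval a (Polynomial.bernoulli p.1) *
        aeval b (Polynomial.bernoulli p.2) =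
      N * (a + b - 1) * aeval (a + b) (Polynomial.bernoulli (N - 1)) -
        (N - 1) * aeval (a + b) (Polynomial.bernoulli N) := by
  set B : A → ℕ → A := fun t n => aeval t (Polynomial.bernoulli n)
  have hgen : expGenFun (B a) * expGenFun (B b) =
      expGenFun (B (a + b)) - X * d⁄dX A (expGenFun (B (a + b)))
        + (a + b - 1) • (X * expGenFun (B (a + b))) := by
    simp only [B, expGenFun_bernoulli]
    rw [← bernoulliPowerSeries_sq_mul_rescale_exp, ← exp_mul_exp_eq_exp_add]
    ring
  rw [expGenFun_mul, X_mul_derivative_expGenFun, X_mul_expGenFun, ← map_sub, ← map_smul,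
    ← map_add] at hgen
  have hN := congrFun (expGenFun_injective hgen) N
  simp only [Pi.add_apply, Pi.sub_apply, Pi.smul_apply, smul_eq_mul] at hN
  linear_combination hN

theorem sum_antidiagonal_neg_one_pow_mul_choose_mul_bernoulli (u v : A) (N : ℕ) :
    ∑ p ∈ antidiagonal (N + 1), (-1) ^ p.1 *
        (((N + 1).choose p.1 : A) * aeval u (Polynomial.bernoulli p.1) *
          aeval v (Polynomial.bernoulli p.2)) =
      (-1) ^ N * (N + 1) * (v - u) * aeval (u - v) (Polynomial.bernoulli N) +
        (-1) ^ N * N * aeval (u - v) (Polynomial.bernoulli (N + 1)) := by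
  have hconv := sum_antidiagonal_choose_mul_bernoulli (1 - u) v (N + 1)
  rw [show 1 - u + v = 1 - (u - v) by ring] at hconv
  simp only [aeval_bernoulli_one_sub, Nat.add_sub_cancel] at hconv
  push_cast at hconv
  refine (sum_congr rfl fun p _ => ?_).trans (hconv.trans ?_) <;> ring

theorem bernoulli_reciprocity_shift_general (n m : ℕ) (u v : A) :
    (∑ a ∈ range (n + 1), (-1) ^ a * ((m + n + 1).choose (n - a) : A) *
        aeval u (Polynomial.bernoulli (n - a)) * aeval v (Polynomial.bernoulli (m + a + 1)))
      - (∑ a ∈ range (m + 1), (-1) ^ a * ((m + n + 1).choose (m - a) : A) *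
        aeval v (Polynomial.bernoulli (m - a)) * aeval u (Polynomial.bernoulli (n + a + 1))) =
      (-1) ^ m * ((m : A) + n + 1) * (v - u) *
          aeval (u - v) (Polynomial.bernoulli (m + n))
        + (-1) ^ m * ((m : A) + n) *
          aeval (u - v) (Polynomial.bernoulli (m + n + 1)) := by
  have hchoose : ∀ a ∈ range (m + 1), (m + n + 1).choose (m - a) = (m + n + 1).choose (n + a + 1) :=
    fun a ha => Nat.choose_symm_of_eq_add (by rw [mem_range] at ha; lia)
  have hsign : (-1 : A) ^ n * (-1) ^ (m + n) = (-1) ^ m := by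
    rw [← pow_add, show n + (m + n) = m + 2 * n by ring, pow_add, pow_mul, neg_one_sq, one_pow,
      mul_one]
  calc
    _ = (-1) ^ n * ∑ p ∈ antidiagonal (m + n + 1), (-1) ^ p.1 *
          (((m + n + 1).choose p.1 : A) * aeval u (Polynomial.bernoulli p.1) *
            aeval v (Polynomial.bernoulli p.2)) := by
      rw [neg_one_pow_mul_sum_antidiagonal fun k l => ((m + n + 1).choose k : A) *
        aeval u (Polynomial.bernoulli k) * aeval v (Polynomial.bernoulli l)]
      congr 1 <;> refine sum_congr rfl fun a ha => ?_
      · ring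
      · rw [hchoose a ha]
        ring
    _ = _ := by
      rw [sum_antidiagonal_neg_one_pow_mul_choose_mul_bernoulli]
      push_cast
      linear_combination (((m : A) + n + 1) * (v - u) *
          aeval (u - v) (Polynomial.bernoulli (m + n))
        + ((m : A) + n) * aeval (u - v) (Polynomial.bernoulli (m + n + 1))) * hsign

end Bernoulli

/-- Identity (28) of the paper, generalizing Agoh–Dilcher's Proposition 2. -/
theorem bernoulli_reciprocity_shift (n m : ℕ) (x y₁ y₂ : ℝ) :
    (∑ a ∈ Finset.range (n + 1), (-1 : ℝ) ^ a * (Nat.choose (m + n + 1) (n - a) : ℝ) *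
        BPoly (n - a) (x + y₁) * BPoly (m + a + 1) (x + y₂))
      - (∑ a ∈ Finset.range (m + 1), (-1 : ℝ) ^ a * (Nat.choose (m + n + 1) (m - a) : ℝ) *
        BPoly (m - a) (x + y₂) * BPoly (n + a + 1) (x + y₁)) =
      (-1 : ℝ) ^ m * ((m : ℝ) + n + 1) * (y₂ - y₁) * BPoly (m + n) (y₁ - y₂)
        + (-1 : ℝ) ^ m * ((m : ℝ) + n) * BPoly (m + n + 1) (y₁ - y₂) := by
  simpa only [BPoly, Polynomial.eval_map_algebraMap, add_sub_add_left_eq_sub] using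
    bernoulli_reciprocity_shift_general n m (x + y₁) (x + y₂)
end

section
/- Let r ≥ 1 and n₁, …, n_r ≥ 0 be integers with n₁+⋯+n_r odd, let q be a nonzero real number, and let y₁, …, y_r be real numbers with y_l ≠ 1/2 for all l. Then ∫_0^q B_{n₁}( ((1−2y₁)/q)·z + y₁ ) ⋯ B_{n_r}( ((1−2y_r)/q)·z + y_r ) dz = 0. -/
open Finset

/-!
Every argument `(1 - 2y)/q * z + y` becomes its complement to `1` under the reflection `z ↦ q - z`
of the interval of integration. Since `B_n(1 - x) = (-1)^n B_n(x)`, this reflection multiplies the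
integrand by `(-1)^(n₁ + ⋯ + n_r) = -1`, so the integral equals its own negative.
-/

theorem intervalIntegral_eq_zero_of_comp_add_sub_eq_neg {E : Type*} [NormedAddCommGroup E]
    [NormedSpace ℝ E] {f : ℝ → E} {a b : ℝ} (hf : ∀ x ∈ Set.uIcc a b, f (a + b - x) = -f x) :
    ∫ x in a..b, f x = 0 := by
  have : IsAddTorsionFree E := .of_isTorsionFree ℝ E
  rw [← self_eq_neg]
  calc
    ∫ x in a..b, f x = ∫ x in a..b, f (a + b - x) := by
      simp only [intervalIntegral.integral_comp_sub_left, add_sub_cancel_left,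
        add_sub_cancel_right]
    _ = ∫ x in a..b, -f x := intervalIntegral.integral_congr hf
    _ = -∫ x in a..b, f x := intervalIntegral.integral_neg

theorem BPoly_one_sub (n : ℕ) (x : ℝ) : BPoly n (1 - x) = (-1) ^ n * BPoly n x :=
  bernoulliFun_eval_one_sub

theorem prod_BPoly_one_sub {ι : Type*} (s : Finset ι) (n : ι → ℕ) (x : ι → ℝ) :
    ∏ l ∈ s, BPoly (n l) (1 - x l) = (-1) ^ (∑ l ∈ s, n l) * ∏ l ∈ s, BPoly (n l) (x l) := by
  simp only [BPoly_one_sub, prod_mul_distrib, prod_pow_eq_pow_sum]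

theorem integral_prod_bernoulli_special_eq_zero_general {ι : Type*} {s : Finset ι} {n : ι → ℕ}
    (hodd : Odd (∑ l ∈ s, n l)) {a b : ℝ} {g : ι → ℝ → ℝ}
    (hg : ∀ l ∈ s, ∀ z ∈ Set.uIcc a b, g l (a + b - z) = 1 - g l z) :
    ∫ z in a..b, ∏ l ∈ s, BPoly (n l) (g l z) = 0 := by
  refine intervalIntegral_eq_zero_of_comp_add_sub_eq_neg fun z hz ↦ ?_
  calc
    ∏ l ∈ s, BPoly (n l) (g l (a + b - z)) = ∏ l ∈ s, BPoly (n l) (1 - g l z) :=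
      prod_congr rfl fun l hl ↦ by rw [hg l hl z hz]
    _ = -∏ l ∈ s, BPoly (n l) (g l z) := by
      rw [prod_BPoly_one_sub, hodd.neg_one_pow, neg_one_mul]

/-- Vanishing of the special product integral (17a): if `n₁ + ⋯ + n_r` is odd then
`∫_0^q ∏ B_{n_l}(((1−2y_l)/q)z + y_l) dz = 0`, for `r = m + 1` factors. -/
theorem integral_prod_bernoulli_special_eq_zero (m : ℕ) (n : Fin (m + 1) → ℕ)
    (hodd : Odd (∑ l, n l)) (q : ℝ) (hq : q ≠ 0) (y : Fin (m + 1) → ℝ)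
    (hy : ∀ l, y l ≠ 1 / 2) :
    ∫ z in (0 : ℝ)..q, ∏ l, BPoly (n l) ((1 - 2 * y l) / q * z + y l) = 0 :=
  integral_prod_bernoulli_special_eq_zero_general hodd fun l _ z _ ↦ by field_simp; ring
end

section
/- Let r ≥ 1 and n₁, …, n_r ≥ 0 be integers with n₁+⋯+n_r even, let q be a nonzero real number, and let y₁, …, y_r be real numbers with y_l ≠ 1/2 for all l. Then (1/(n₁!⋯n_r!))·∫_0^q B_{n₁}( ((1−2y₁)/q)·z + y₁ ) ⋯ B_{n_r}( ((1−2y_r)/q)·z + y_r ) dz = −2q · Σ_{a=0}^{n₁+⋯+n_{r−1}} (−1)^a · ( (1−2y_r)^{−a−1} / (n_r+a+1)! ) · B_{n_r+a+1}(y_r) · Σ_{j₁+⋯+j_{r−1}=a, 0≤j_l≤n_l} ( a!/(j₁!⋯j_{r−1}!) ) · ∏_{l=1}^{r−1} ( (1−2y_l)^{j_l} / (n_l−j_l)! ) · B_{n_l−j_l}(y_l). -/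
open Finset

/-!
After rescaling to `[0, 1]`, the factors become `Q_{n,y}(x) = B_n((1 - 2y)x + y) / n!`. They satisfy
`Q_{n+1,y}' = (1 - 2y) Q_{n,y}`, and they have parity `(-1)^n` under `x ↦ 1 - x`, because
`x ↦ (1 - 2y)x + y` commutes with this reflection. Integrating the last factor repeatedly and
differentiating the product `P` of the others gives a primitive of the integrand after finitely many
steps. When `n₁ + ⋯ + n_r` is even this primitive is odd under the reflection, so the boundary terms
at `0` and `1` add up. Finally `P⁽ᵃ⁾(0)` is `a!` times the `a`-th coefficient of a product.
-/

section Polynomials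

open Polynomial

variable {R ι : Type*}

lemma eval_zero_iterate_derivative [CommSemiring R] (P : R[X]) (a : ℕ) :
    (derivative^[a] P).eval 0 = a.factorial * P.coeff a := by
  rw [← coeff_zero_eq_eval_zero, coeff_iterate_derivative, zero_add, Nat.descFactorial_self,
    nsmul_eq_mul]

lemma coeff_prod_eq_sum_piFinset [CommSemiring R] [Fintype ι] [DecidableEq ι] {P : ι → R[X]}
    {n : ι → ℕ} (hP : ∀ i, (P i).natDegree ≤ n i) (a : ℕ) :
    (∏ i, P i).coeff a =
      ∑ j ∈ (Fintype.piFinset fun i => range (n i + 1)).filter (fun j => ∑ i, j i = a),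
        ∏ i, (P i).coeff (j i) := by
  calc (∏ i, P i).coeff a
      = (∏ i, ∑ k ∈ range (n i + 1), C ((P i).coeff k) * X ^ k).coeff a := by
        rw [prod_congr rfl fun i _ =>
          (P i).as_sum_range_C_mul_X_pow' (Nat.lt_succ_of_le (hP i))]
    _ = ∑ j ∈ Fintype.piFinset fun i => range (n i + 1),
          (C (∏ i, (P i).coeff (j i)) * X ^ ∑ i, j i).coeff a := by
        simp only [prod_univ_sum, finsetSum_coeff, prod_mul_distrib, prod_pow_eq_pow_sum, map_prod]
    _ = _ := by
        simp only [coeff_C_mul_X_pow, sum_filter, eq_comm]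

lemma integral_eval_derivative (F : ℝ[X]) (a b : ℝ) :
    ∫ x in a..b, (derivative F).eval x = F.eval b - F.eval a :=
  intervalIntegral.integral_eq_sub_of_hasDerivAt (fun x _ => F.hasDerivAt x)
    ((derivative F).continuous.intervalIntegrable a b)

/-- `P` has parity `(-1) ^ N` under the reflection `x ↦ 1 - x`. Only the class of `N` modulo `2`
matters; a natural number is used so that `N` can be the degree of a Bernoulli polynomial. -/
def HasReflectionParity [CommRing R] (N : ℕ) (P : R[X]) : Prop :=
  P.comp (1 - X) = (-1) ^ N * P

namespace HasReflectionParity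

variable [CommRing R] {M N : ℕ} {P Q : R[X]}

lemma mul (hP : HasReflectionParity M P) (hQ : HasReflectionParity N Q) :
    HasReflectionParity (M + N) (P * Q) := by
  rw [HasReflectionParity, mul_comp, hP, hQ]
  ring

lemma C_mul (hP : HasReflectionParity N P) (c : R) : HasReflectionParity N (C c * P) := by
  rw [HasReflectionParity, mul_comp, C_comp, hP]
  ring

lemma prod {s : Finset ι} {n : ι → ℕ} {P : ι → R[X]}
    (hP : ∀ i ∈ s, HasReflectionParity (n i) (P i)) :
    HasReflectionParity (∑ i ∈ s, n i) (∏ i ∈ s, P i) := by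
  rw [HasReflectionParity, Polynomial.prod_comp, prod_congr rfl hP, prod_mul_distrib,
    prod_pow_eq_pow_sum]

lemma iterate_derivative (hP : HasReflectionParity N P) (a : ℕ) :
    HasReflectionParity (N + a) (derivative^[a] P) := by
  have hsign : (-1 : R[X]) ^ a * (-1) ^ a = 1 := by rw [← mul_pow, neg_one_mul, neg_neg, one_pow]
  have hcomp : (-1) ^ N * derivative^[a] P = (-1) ^ a * (derivative^[a] P).comp (1 - X) := by
    rw [← iterate_derivative_comp_one_sub_X, hP, ← C_1, ← C_neg, ← C_pow,
      iterate_derivative_C_mul]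
  calc (derivative^[a] P).comp (1 - X)
      = (-1) ^ a * ((-1) ^ a * (derivative^[a] P).comp (1 - X)) := by
        rw [← mul_assoc, hsign, one_mul]
    _ = (-1) ^ (N + a) * derivative^[a] P := by
        rw [← hcomp]
        ring

lemma eval_one (hP : HasReflectionParity N P) : P.eval 1 = (-1) ^ N * P.eval 0 := by
  simpa [eval_comp] using congrArg (eval 0) hP

end HasReflectionParity

/-- The candidate primitive of `P * G 0` produced by `K` integrations by parts, where `G (a + 1)` is
meant to be a primitive of `G a`. -/
noncomputable def primitiveByParts [CommRing R] (P : R[X]) (G : ℕ → R[X]) (K : ℕ) : R[X] :=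
  ∑ a ∈ range K, (-1) ^ a * (derivative^[a] P * G (a + 1))

section PrimitiveByParts

variable [CommRing R] {P : R[X]} {G : ℕ → R[X]} {K : ℕ}

lemma derivative_primitiveByParts_eq_sub (hG : ∀ a, derivative (G (a + 1)) = G a) :
    derivative (primitiveByParts P G K) = P * G 0 - (-1) ^ K * (derivative^[K] P * G K) := by
  induction K with
  | zero => simp [primitiveByParts]
  | succ K ih =>
    have hsign : derivative ((-1 : R[X]) ^ K) = 0 := by
      rw [← C_1, ← C_neg, ← C_pow, derivative_C]
    rw [primitiveByParts, sum_range_succ, ← primitiveByParts, derivative_add, ih, derivative_mul,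
      derivative_mul, hsign, hG, Function.iterate_succ_apply']
    ring

lemma derivative_primitiveByParts (hG : ∀ a, derivative (G (a + 1)) = G a)
    (hK : P.natDegree < K) : derivative (primitiveByParts P G K) = P * G 0 := by
  rw [derivative_primitiveByParts_eq_sub hG, iterate_derivative_eq_zero hK, zero_mul, mul_zero,
    sub_zero]

lemma eval_zero_primitiveByParts :
    (primitiveByParts P G K).eval 0 =
      ∑ a ∈ range K, (-1) ^ a * ((derivative^[a] P).eval 0 * (G (a + 1)).eval 0) := by
  simp [primitiveByParts, eval_finsetSum]

lemma eval_one_primitiveByParts {N n : ℕ} (hP : HasReflectionParity N P)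
    (hG : ∀ a, HasReflectionParity (n + a) (G a)) (hNn : Even (N + n)) :
    (primitiveByParts P G K).eval 1 = -(primitiveByParts P G K).eval 0 := by
  simp only [primitiveByParts, eval_finsetSum, ← sum_neg_distrib]
  refine sum_congr rfl fun a _ => ?_
  have hodd : Odd (N + a + (n + (a + 1))) := by grind
  have hterm := ((hP.iterate_derivative a).mul (hG (a + 1))).eval_one
  rw [hodd.neg_one_pow] at hterm
  rw [eval_mul, hterm]
  simp

end PrimitiveByParts

lemma integral_eval_mul_of_hasReflectionParity {P : ℝ[X]} {G : ℕ → ℝ[X]} {N n K : ℕ}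
    (hP : HasReflectionParity N P) (hG : ∀ a, HasReflectionParity (n + a) (G a))
    (hG' : ∀ a, derivative (G (a + 1)) = G a) (hNn : Even (N + n)) (hK : P.natDegree < K) :
    ∫ x in (0 : ℝ)..1, (P * G 0).eval x =
      -2 * ∑ a ∈ range K, (-1) ^ a * ((derivative^[a] P).eval 0 * (G (a + 1)).eval 0) := by
  rw [← derivative_primitiveByParts hG' hK, integral_eval_derivative,
    eval_one_primitiveByParts hP hG hNn, ← eval_zero_primitiveByParts]
  ring

end Polynomials

section Bernoulli

open Polynomial

lemma natDegree_bernoulli_le (n : ℕ) : (Polynomial.bernoulli n).natDegree ≤ n :=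
  natDegree_le_iff_coeff_eq_zero.mpr fun i hi => by
    rw [Polynomial.coeff_bernoulli, if_neg hi.not_ge]

section Algebra

variable {R : Type*} [CommRing R] [Algebra ℚ R]

/-- The polynomial `B_n((1 - 2y)X + y) / n!`. The inner affine map sends `0` to `y` and `1` to
`1 - y`; the factor `1 / n!` makes differentiation lower `n` without a numerical factor `n`. -/
noncomputable def scaledBernoulli (n : ℕ) (y : R) : R[X] :=
  ((C (n.factorial : ℚ)⁻¹ * Polynomial.bernoulli n).map (algebraMap ℚ R)).comp
    (C (1 - 2 * y) * X + C y)

lemma natDegree_scaledBernoulli_le (n : ℕ) (y : R) : (scaledBernoulli n y).natDegree ≤ n := by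
  have hbernoulli := (natDegree_map_le (f := algebraMap ℚ R)).trans
    ((natDegree_C_mul_le (n.factorial : ℚ)⁻¹ _).trans (natDegree_bernoulli_le n))
  exact natDegree_comp_le.trans ((Nat.mul_le_mul hbernoulli natDegree_linear_le).trans_eq
    (mul_one n))

lemma derivative_scaledBernoulli_add_one (n : ℕ) (y : R) :
    derivative (scaledBernoulli (n + 1) y) = C (1 - 2 * y) * scaledBernoulli n y := by
  have happell : derivative (C ((n + 1).factorial : ℚ)⁻¹ * Polynomial.bernoulli (n + 1)) =
      C (n.factorial : ℚ)⁻¹ * Polynomial.bernoulli n := by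
    have hn : (n : ℚ[X]) + 1 = C ((n : ℚ) + 1) := by simp
    rw [derivative_C_mul, Polynomial.derivative_bernoulli_add_one, hn, ← mul_assoc, ← C_mul,
      Nat.factorial_succ]
    congr 2
    push_cast
    field_simp
  rw [scaledBernoulli, derivative_comp, derivative_map, happell, scaledBernoulli,
    derivative_add, derivative_C_mul, derivative_X, derivative_C, mul_one, add_zero]

lemma iterate_derivative_scaledBernoulli_add (j n : ℕ) (y : R) :
    derivative^[j] (scaledBernoulli (n + j) y) = C ((1 - 2 * y) ^ j) * scaledBernoulli n y := by
  induction j with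
  | zero => simp
  | succ j ih =>
    rw [Function.iterate_succ_apply, ← add_assoc, derivative_scaledBernoulli_add_one,
      iterate_derivative_C_mul, ih, ← mul_assoc, ← C_mul, pow_succ']

lemma hasReflectionParity_scaledBernoulli (n : ℕ) (y : R) :
    HasReflectionParity n (scaledBernoulli n y) := by
  have hbernoulli : HasReflectionParity n
      ((C (n.factorial : ℚ)⁻¹ * Polynomial.bernoulli n).map (algebraMap ℚ R)) := by
    have h := HasReflectionParity.C_mul (Polynomial.bernoulli_comp_one_sub_X n) (n.factorial : ℚ)⁻¹
    simpa only [HasReflectionParity, Polynomial.map_comp, Polynomial.map_mul, Polynomial.map_pow,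
      Polynomial.map_sub, Polynomial.map_neg, Polynomial.map_one, map_X]
      using congrArg (map (algebraMap ℚ R)) h
  have hcommute : (C (1 - 2 * y) * X + C y : R[X]).comp (1 - X) =
      (1 - X : R[X]).comp (C (1 - 2 * y) * X + C y) := by
    simp only [add_comp, sub_comp, mul_comp, C_comp, X_comp, one_comp, ofNat_comp, C_sub, C_mul,
      C_1, C_ofNat]
    ring
  rw [HasReflectionParity, scaledBernoulli, comp_assoc, hcommute, ← comp_assoc, hbernoulli,
    mul_comp, pow_comp, neg_comp, one_comp]

end Algebra

lemma eval_scaledBernoulli (n : ℕ) (y x : ℝ) :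
    (scaledBernoulli n y).eval x = BPoly n ((1 - 2 * y) * x + y) / n.factorial := by
  simp [scaledBernoulli, BPoly, eval_comp, div_eq_inv_mul]

lemma eval_zero_scaledBernoulli (n : ℕ) (y : ℝ) :
    (scaledBernoulli n y).eval 0 = BPoly n y / n.factorial := by
  rw [eval_scaledBernoulli, mul_zero, zero_add]

lemma coeff_scaledBernoulli {j n : ℕ} (hj : j ≤ n) (y : ℝ) :
    (scaledBernoulli n y).coeff j =
      (j.factorial : ℝ)⁻¹ * ((1 - 2 * y) ^ j / (n - j).factorial * BPoly (n - j) y) := by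
  have htaylor := eval_zero_iterate_derivative (scaledBernoulli n y) j
  nth_rw 1 [← Nat.sub_add_cancel hj] at htaylor
  rw [iterate_derivative_scaledBernoulli_add, eval_C_mul, eval_zero_scaledBernoulli] at htaylor
  rw [div_mul_eq_mul_div, mul_div_assoc, htaylor, inv_mul_cancel_left₀ (by positivity)]

lemma natDegree_prod_scaledBernoulli_le {R ι : Type*} [CommRing R] [Algebra ℚ R] (s : Finset ι)
    (n : ι → ℕ) (y : ι → R) :
    (∏ i ∈ s, scaledBernoulli (n i) (y i)).natDegree ≤ ∑ i ∈ s, n i :=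
  (natDegree_prod_le _ _).trans (sum_le_sum fun _ _ => natDegree_scaledBernoulli_le _ _)

lemma eval_zero_iterate_derivative_prod_scaledBernoulli {ι : Type*} [Fintype ι] [DecidableEq ι]
    (n : ι → ℕ) (y : ι → ℝ) (a : ℕ) :
    (derivative^[a] (∏ i, scaledBernoulli (n i) (y i))).eval 0 =
      ∑ j ∈ (Fintype.piFinset fun i => range (n i + 1)).filter (fun j => ∑ i, j i = a),
        (a.factorial : ℝ) / (∏ i, ((j i).factorial : ℝ)) *
          ∏ i, (1 - 2 * y i) ^ j i / ((n i - j i).factorial : ℝ) * BPoly (n i - j i) (y i) := by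
  rw [eval_zero_iterate_derivative,
    coeff_prod_eq_sum_piFinset fun i => natDegree_scaledBernoulli_le (n i) (y i), mul_sum]
  refine sum_congr rfl fun j hj => ?_
  have hle (i : ι) : j i ≤ n i :=
    mem_range_succ_iff.mp (Fintype.mem_piFinset.mp (mem_filter.mp hj).1 i)
  rw [prod_congr rfl fun i _ => coeff_scaledBernoulli (hle i) (y i), prod_mul_distrib,
    prod_inv_distrib, div_eq_mul_inv, mul_assoc]

lemma integral_eval_mul_scaledBernoulli {P : ℝ[X]} {N n K : ℕ} (hP : HasReflectionParity N P)
    (hNn : Even (N + n)) (hK : P.natDegree < K) {y : ℝ} (hy : y ≠ 1 / 2) :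
    ∫ x in (0 : ℝ)..1, (P * scaledBernoulli n y).eval x =
      -2 * ∑ a ∈ range K, (-1) ^ a * ((1 - 2 * y) ^ (-(a : ℤ) - 1) / (n + a + 1).factorial) *
        BPoly (n + a + 1) y * (derivative^[a] P).eval 0 := by
  have hslope : 1 - 2 * y ≠ 0 := fun h => hy (by linarith)
  let G (a : ℕ) : ℝ[X] := C ((1 - 2 * y) ^ (-(a : ℤ))) * scaledBernoulli (n + a) y
  have hG (a : ℕ) : HasReflectionParity (n + a) (G a) :=
    (hasReflectionParity_scaledBernoulli (n + a) y).C_mul _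
  have hG' (a : ℕ) : derivative (G (a + 1)) = G a := by
    rw [derivative_C_mul, ← add_assoc, derivative_scaledBernoulli_add_one, ← mul_assoc, ← C_mul,
      ← zpow_add_one₀ hslope]
    congr 4
    push_cast
    ring
  have hG_zero : G 0 = scaledBernoulli n y := by simp [G]
  rw [← hG_zero, integral_eval_mul_of_hasReflectionParity hP hG hG' hNn hK]
  refine congrArg (-2 * ·) (sum_congr rfl fun a _ => ?_)
  rw [eval_C_mul, eval_zero_scaledBernoulli, ← add_assoc, Nat.cast_add_one, neg_add']
  ring

lemma inv_prod_factorial_mul_integral_prod_BPoly {ι : Type*} [Fintype ι] (n : ι → ℕ) (y : ι → ℝ)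
    {q : ℝ} (hq : q ≠ 0) :
    (1 / ∏ i, ((n i).factorial : ℝ)) *
        ∫ z in (0 : ℝ)..q, ∏ i, BPoly (n i) ((1 - 2 * y i) / q * z + y i) =
      q * ∫ x in (0 : ℝ)..1, (∏ i, scaledBernoulli (n i) (y i)).eval x := by
  have hintegrand (z : ℝ) : (1 / ∏ i, ((n i).factorial : ℝ)) *
      ∏ i, BPoly (n i) ((1 - 2 * y i) / q * z + y i) =
        (∏ i, scaledBernoulli (n i) (y i)).eval (z / q) := by
    simp only [eval_prod, eval_scaledBernoulli, prod_div_distrib, div_mul_eq_mul_div,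
      mul_div_assoc, one_mul]
  rw [← intervalIntegral.integral_const_mul]
  simp only [hintegrand]
  rw [intervalIntegral.integral_comp_div (fun x => (∏ i, scaledBernoulli (n i) (y i)).eval x) hq,
    zero_div, div_self hq, smul_eq_mul]

end Bernoulli

/-- Evaluation of the special product integral (17b): the case where `n₁ + ⋯ + n_r` is even,
for `r = m + 1` factors. -/
theorem integral_prod_bernoulli_special_eq (m : ℕ) (n : Fin (m + 1) → ℕ)
    (heven : Even (∑ l, n l)) (q : ℝ) (hq : q ≠ 0) (y : Fin (m + 1) → ℝ)
    (hy : ∀ l, y l ≠ 1 / 2) :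
    (1 / ∏ l, ((n l).factorial : ℝ)) *
        ∫ z in (0 : ℝ)..q, ∏ l, BPoly (n l) ((1 - 2 * y l) / q * z + y l) =
      -2 * q * ∑ a ∈ Finset.range ((∑ l : Fin m, n l.castSucc) + 1), (-1 : ℝ) ^ a *
        ((1 - 2 * y (Fin.last m)) ^ (-(a : ℤ) - 1) / ((n (Fin.last m) + a + 1).factorial : ℝ)) *
        BPoly (n (Fin.last m) + a + 1) (y (Fin.last m)) *
        ∑ j ∈ (Fintype.piFinset fun l : Fin m => Finset.range (n l.castSucc + 1)).filter
            (fun j => ∑ l, j l = a),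
          ((a.factorial : ℝ) / ∏ l, ((j l).factorial : ℝ)) *
            ∏ l : Fin m, (1 - 2 * y l.castSucc) ^ j l / ((n l.castSucc - j l).factorial : ℝ) *
              BPoly (n l.castSucc - j l) (y l.castSucc) := by
  have hparity : HasReflectionParity (∑ l : Fin m, n l.castSucc)
      (∏ l : Fin m, scaledBernoulli (n l.castSucc) (y l.castSucc)) :=
    HasReflectionParity.prod fun l _ => hasReflectionParity_scaledBernoulli _ _
  have hdegree := natDegree_prod_scaledBernoulli_le univ
    (fun l : Fin m => n l.castSucc) (fun l => y l.castSucc)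
  rw [Fin.sum_univ_castSucc] at heven
  rw [inv_prod_factorial_mul_integral_prod_BPoly n y hq, Fin.prod_univ_castSucc,
    integral_eval_mul_scaledBernoulli hparity heven (Nat.lt_succ_of_le hdegree) (hy (Fin.last m))]
  simp only [eval_zero_iterate_derivative_prod_scaledBernoulli]
  ring
end

section
/- Let m, n ≥ 1 be integers, let χ₁, χ₂ be non-principal primitive Dirichlet characters of moduli k₁ and k₂ respectively, let b₁, b₂ be nonzero real numbers, and let x, y₁, y₂ be real numbers. Then Σ_{a=0}^{n} (−1)^a·C(m+n+1, n−a)·b₁^a·b₂^{−a−1}·B_{n−a,χ₁}(b₁x+y₁)·B_{m+a+1,χ₂}(b₂x+y₂) − Σ_{a=0}^{m} (−1)^a·C(m+n+1, m−a)·b₂^a·b₁^{−a−1}·B_{m−a,χ₂}(b₂x+y₂)·B_{n+a+1,χ₁}(b₁x+y₁) = ((−1)^{m+1}/(b₁^{m+1}·b₂^{n+1})) · Σ_{a=0}^{m+n+1} (−1)^a·C(m+n+1, a)·b₁^a·b₂^{m+n+1−a}·B_{m+n+1−a,χ₁}(y₁)·B_{a,χ₂}(y₂). -/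
open Finset

/-- The generalized Bernoulli polynomial `B_{n,χ}(x) = k^{n−1} Σ_{a=0}^{k−1} χ̄(a) Bₙ((a+x)/k)`. -/
noncomputable def BPolyChar {k : ℕ} (χ : DirichletCharacter ℂ k) (n : ℕ) (x : ℝ) : ℂ :=
  (k : ℂ) ^ ((n : ℤ) - 1) *
    ∑ a ∈ Finset.range k, (starRingEnd ℂ) (χ (a : ZMod k)) * ((BPoly n (((a : ℝ) + x) / k)) : ℂ)

/-!
In an Appell sequence of functions, `pₙ` has derivative `n pₙ₋₁`. For two Appell sequences `p`, `q`
the alternating binomial convolution `Σ (-1)ⁱ C(N, i) pᵢ q_{N-i}` has derivative zero, because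
`i C(N, i) = (N - i + 1) C(N, i - 1)` makes the two halves of the product rule cancel, so it takes
the same value at `x` and at `0`. For `N = m + n + 1`, cutting the sum at `x` after its first
`m + 1` terms gives the two sums of the reciprocity law. The sequences are
`pₙ(x) = b₂⁻ⁿ B_{n,χ₂}(b₂ x + y₂)` and `qₙ(x) = b₁⁻ⁿ B_{n,χ₁}(b₁ x + y₁)`.
-/

section AlternatingBinomialConv

variable {R : Type*} [CommRing R]

/-- The alternating binomial convolution `Σ_{i+j=N} (-1)ⁱ C(N, i) pᵢ qⱼ` of two sequences; it is
`N!` times the coefficient of `t^N` in the product of the exponential generating functions of `p`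
at `-t` and of `q` at `t`. -/
def alternatingBinomialConv (N : ℕ) (p q : ℕ → R) : R :=
  ∑ ij ∈ antidiagonal N, (-1) ^ ij.1 * (N.choose ij.1 : R) * (p ij.1 * q ij.2)

lemma alternatingBinomialConv_eq_sum_range (N : ℕ) (p q : ℕ → R) :
    alternatingBinomialConv N p q =
      ∑ i ∈ range (N + 1), (-1) ^ i * (N.choose i : R) * (p i * q (N - i)) :=
  Nat.sum_antidiagonal_eq_sum_range_succ
    (fun i j ↦ (-1) ^ i * (N.choose i : R) * (p i * q j)) N

lemma neg_one_pow_sub {m a : ℕ} (h : a ≤ m) : (-1 : R) ^ (m - a) = (-1) ^ m * (-1) ^ a := by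
  rw [← pow_sub_mul_pow (-1) h, mul_assoc, pow_mul_pow_eq_one a (by simp), mul_one]

lemma neg_one_pow_mul_alternatingBinomialConv (m n : ℕ) (p q : ℕ → R) :
    (-1) ^ (m + 1) * alternatingBinomialConv (m + n + 1) q p =
      ∑ a ∈ range (n + 1),
          (-1) ^ a * ((m + n + 1).choose (n - a) : R) * (p (n - a) * q (m + a + 1)) -
        ∑ a ∈ range (m + 1),
          (-1) ^ a * ((m + n + 1).choose (m - a) : R) * (q (m - a) * p (n + a + 1)) := by
  have sign_mul_self (k : ℕ) : (-1 : R) ^ k * (-1) ^ k = 1 :=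
    pow_mul_pow_eq_one k (by simp)
  rw [alternatingBinomialConv_eq_sum_range, show m + n + 1 + 1 = (m + 1) + (n + 1) by ring,
    sum_range_add, mul_add, add_comm, sub_eq_add_neg]
  congr 1
  · rw [mul_sum]
    refine sum_congr rfl fun a ha ↦ ?_
    have ha : a ≤ n := Nat.lt_succ_iff.mp (mem_range.mp ha)
    rw [Nat.choose_symm_of_eq_add (show m + n + 1 = (m + 1 + a) + (n - a) by lia),
      show m + n + 1 - (m + 1 + a) = n - a by lia, add_right_comm m 1 a]
    linear_combination ((-1) ^ a * ((m + n + 1).choose (n - a) : R) *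
      (p (n - a) * q (m + a + 1))) * sign_mul_self (m + 1)
  · rw [← sum_range_reflect, mul_sum, ← sum_neg_distrib]
    refine sum_congr rfl fun a ha ↦ ?_
    have ha : a ≤ m := Nat.lt_succ_iff.mp (mem_range.mp ha)
    rw [Nat.add_sub_cancel, neg_one_pow_sub ha, show m + n + 1 - (m - a) = n + a + 1 by lia]
    linear_combination (-(-1) ^ a * ((m + n + 1).choose (m - a) : R) *
      (q (m - a) * p (n + a + 1))) * sign_mul_self m

end AlternatingBinomialConv

section Appell

variable {𝕜 E : Type*}

/-- Appell sequences of differentiable functions: `pₙ` has derivative `n pₙ₋₁`. The member `p 0` is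
any function of derivative zero, possibly the zero function; the truncated index `0 - 1` in its
derivative is harmless because of the factor `0`. -/
def IsAppellSequence [NontriviallyNormedField 𝕜] [NormedAddCommGroup E] [NormedSpace 𝕜 E]
    (p : ℕ → 𝕜 → E) : Prop :=
  ∀ n x, HasDerivAt (p n) (n • p (n - 1) x) x

namespace IsAppellSequence

lemma inv_pow_smul_comp_affine [NontriviallyNormedField 𝕜] [NormedAddCommGroup E]
    [NormedSpace 𝕜 E] {p : ℕ → 𝕜 → E} (hp : IsAppellSequence p) {c : 𝕜} (hc : c ≠ 0) (y : 𝕜) :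
    IsAppellSequence fun n x ↦ c⁻¹ ^ n • p n (c * x + y) := by
  intro n x
  have affine : HasDerivAt (fun x ↦ c * x + y) c x := by
    simpa using ((hasDerivAt_id x).const_mul c).add_const y
  refine (((hp n _).scomp x affine).const_smul (c⁻¹ ^ n)).congr_deriv ?_
  cases n with
  | zero => simp
  | succ n =>
    rw [smul_smul, pow_succ, inv_mul_cancel_right₀ hc, smul_comm, Nat.add_sub_cancel]

lemma sum_const_mul [NontriviallyNormedField 𝕜] [NormedRing E] [NormedAlgebra 𝕜 E] {ι : Type*}
    {s : Finset ι} {p : ι → ℕ → 𝕜 → E} (hp : ∀ i ∈ s, IsAppellSequence (p i)) (c : ι → E) :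
    IsAppellSequence fun n x ↦ ∑ i ∈ s, c i * p i n x := by
  intro n x
  refine (HasDerivAt.fun_sum fun i hi ↦ (hp i hi n x).const_mul (c i)).congr_deriv ?_
  simp only [smul_sum, mul_smul_comm]

lemma ofReal_comp {p : ℕ → ℝ → ℝ} (hp : IsAppellSequence p) :
    IsAppellSequence fun n x ↦ (p n x : ℂ) :=
  fun n x ↦ (hp n x).ofReal_comp.congr_deriv (by simp)

variable [NormedCommRing E]

lemma hasDerivAt_alternatingBinomialConv [NontriviallyNormedField 𝕜] [NormedAlgebra 𝕜 E]
    {p q : ℕ → 𝕜 → E} (hp : IsAppellSequence p) (hq : IsAppellSequence q) (N : ℕ) (x : 𝕜) :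
    HasDerivAt (fun x ↦ alternatingBinomialConv N (p · x) (q · x)) 0 x := by
  refine (HasDerivAt.fun_sum fun ij _ ↦ ((hp ij.1 x).mul (hq ij.2 x)).const_mul
    ((-1) ^ ij.1 * (N.choose ij.1 : E))).congr_deriv ?_
  cases N with
  | zero => simp
  | succ N =>
    simp only [mul_add, sum_add_distrib]
    rw [Nat.sum_antidiagonal_succ, Nat.sum_antidiagonal_succ']
    simp only [zero_smul, zero_mul, mul_zero, zero_add, Nat.add_sub_cancel]
    rw [← sum_add_distrib]
    refine sum_eq_zero fun ⟨i, j⟩ hij ↦ ?_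
    have absorption : ((N + 1).choose (i + 1) : E) * (i + 1) = (N + 1).choose i * (j + 1) := by
      have := Nat.choose_succ_right_eq (N + 1) i
      rw [show N + 1 - i = j + 1 by have := mem_antidiagonal.mp hij; lia] at this
      exact_mod_cast congrArg (Nat.cast : ℕ → E) this
    simp only [nsmul_eq_mul, Nat.cast_add, Nat.cast_one]
    linear_combination (-(-1) ^ i * p i x * q j x) * absorption

lemma alternatingBinomialConv_eq [RCLike 𝕜] [NormedAlgebra 𝕜 E] {p q : ℕ → 𝕜 → E}
    (hp : IsAppellSequence p) (hq : IsAppellSequence q) (N : ℕ) (x y : 𝕜) :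
    alternatingBinomialConv N (p · x) (q · x) = alternatingBinomialConv N (p · y) (q · y) :=
  have deriv_zero := hp.hasDerivAt_alternatingBinomialConv hq N
  is_const_of_deriv_eq_zero (fun z ↦ (deriv_zero z).differentiableAt) (fun z ↦ (deriv_zero z).deriv)
    x y

end IsAppellSequence

end Appell

section Bernoulli

lemma isAppellSequence_BPoly : IsAppellSequence BPoly := fun n x ↦
  (hasDerivAt_bernoulliFun n x).congr_deriv (nsmul_eq_mul _ _).symm

lemma BPolyChar_eq_sum_inv_pow_smul {k : ℕ} [NeZero k] (χ : DirichletCharacter ℂ k) (n : ℕ)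
    (x : ℝ) :
    BPolyChar χ n x = ∑ a ∈ range k, ((k : ℂ)⁻¹ * starRingEnd ℂ (χ (a : ZMod k))) *
      ((k : ℝ)⁻¹⁻¹ ^ n • (BPoly n ((k : ℝ)⁻¹ * x + a / k) : ℂ)) := by
  rw [BPolyChar, mul_sum, zpow_sub_one₀ (NeZero.ne _), zpow_natCast]
  refine sum_congr rfl fun a _ ↦ ?_
  rw [show ((a : ℝ) + x) / k = (k : ℝ)⁻¹ * x + a / k by ring, inv_inv, Complex.real_smul,
    Complex.ofReal_pow, Complex.ofReal_natCast]
  ring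

lemma isAppellSequence_BPolyChar {k : ℕ} [NeZero k] (χ : DirichletCharacter ℂ k) :
    IsAppellSequence (BPolyChar χ) := by
  have hk : (k : ℝ)⁻¹ ≠ 0 := inv_ne_zero (NeZero.ne _)
  rw [funext₂ (BPolyChar_eq_sum_inv_pow_smul χ)]
  exact .sum_const_mul
    (fun _ _ ↦ isAppellSequence_BPoly.ofReal_comp.inv_pow_smul_comp_affine hk _) _

end Bernoulli

section Scaling

variable {K : Type*} [Field K] {b c : K}

lemma pow_mul_zpow_neg_sub_one (hb : b ≠ 0) (hc : c ≠ 0) (m : ℕ) {n a : ℕ} (h : a ≤ n) :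
    b ^ a * c ^ (-(a : ℤ) - 1) = b ^ n * c ^ m * (b⁻¹ ^ (n - a) * c⁻¹ ^ (m + a + 1)) := by
  obtain ⟨d, rfl⟩ := Nat.exists_eq_add_of_le h
  rw [Nat.add_sub_cancel_left, zpow_sub_one₀ hc, zpow_neg, zpow_natCast]
  simp only [inv_pow]
  field_simp
  ring

lemma pow_mul_pow_sub_div (hb : b ≠ 0) (hc : c ≠ 0) {m n a : ℕ} (h : a ≤ m + n + 1) :
    b ^ a * c ^ (m + n + 1 - a) / (b ^ (m + 1) * c ^ (n + 1)) =
      b ^ n * c ^ m * (b⁻¹ ^ (m + n + 1 - a) * c⁻¹ ^ a) := by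
  obtain ⟨d, hd⟩ := Nat.exists_eq_add_of_le h
  have pow_split (t : K) : t ^ a * t ^ d = t ^ m * t ^ n * t := by
    rw [← pow_add, ← hd, pow_succ, pow_add]
  rw [hd, Nat.add_sub_cancel_left]
  simp only [inv_pow]
  field_simp
  linear_combination c ^ a * c ^ d * pow_split b + b ^ m * b ^ n * b * pow_split c

lemma sum_sub_sum_eq_alternatingBinomialConv (hb : b ≠ 0) (hc : c ≠ 0) (m n : ℕ) (P Q : ℕ → K) :
    (∑ a ∈ range (n + 1), (-1) ^ a * ((m + n + 1).choose (n - a) : K) *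
          b ^ a * c ^ (-(a : ℤ) - 1) * P (n - a) * Q (m + a + 1))
      - (∑ a ∈ range (m + 1), (-1) ^ a * ((m + n + 1).choose (m - a) : K) *
          c ^ a * b ^ (-(a : ℤ) - 1) * Q (m - a) * P (n + a + 1)) =
      b ^ n * c ^ m * ((-1) ^ (m + 1) *
        alternatingBinomialConv (m + n + 1) (fun i ↦ c⁻¹ ^ i * Q i) (fun i ↦ b⁻¹ ^ i * P i)) := by
  rw [neg_one_pow_mul_alternatingBinomialConv, mul_sub, mul_sum, mul_sum]
  congr 1 <;> refine sum_congr rfl fun a ha ↦ ?_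
  · linear_combination (-1) ^ a * ((m + n + 1).choose (n - a) : K) * P (n - a) * Q (m + a + 1) *
      pow_mul_zpow_neg_sub_one hb hc m (Nat.lt_succ_iff.mp (mem_range.mp ha))
  · linear_combination (-1) ^ a * ((m + n + 1).choose (m - a) : K) * Q (m - a) * P (n + a + 1) *
      pow_mul_zpow_neg_sub_one hc hb n (Nat.lt_succ_iff.mp (mem_range.mp ha))

lemma div_mul_sum_eq_alternatingBinomialConv (hb : b ≠ 0) (hc : c ≠ 0) (m n : ℕ) (P Q : ℕ → K) :
    ((-1) ^ (m + 1) / (b ^ (m + 1) * c ^ (n + 1))) *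
        ∑ a ∈ range (m + n + 2), (-1) ^ a * ((m + n + 1).choose a : K) *
          b ^ a * c ^ (m + n + 1 - a) * P (m + n + 1 - a) * Q a =
      b ^ n * c ^ m * ((-1) ^ (m + 1) *
        alternatingBinomialConv (m + n + 1) (fun i ↦ c⁻¹ ^ i * Q i) (fun i ↦ b⁻¹ ^ i * P i)) := by
  rw [alternatingBinomialConv_eq_sum_range]
  simp only [mul_sum]
  refine sum_congr rfl fun a ha ↦ ?_
  linear_combination (-1) ^ (m + 1) * (-1) ^ a * ((m + n + 1).choose a : K) *
    P (m + n + 1 - a) * Q a * pow_mul_pow_sub_div hb hc (Nat.lt_succ_iff.mp (mem_range.mp ha))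

end Scaling

theorem generalized_bernoulli_reciprocity_general (m n : ℕ)
    (k₁ k₂ : ℕ) [NeZero k₁] [NeZero k₂]
    (χ₁ : DirichletCharacter ℂ k₁) (χ₂ : DirichletCharacter ℂ k₂)
    (b₁ b₂ : ℝ) (hb₁ : b₁ ≠ 0) (hb₂ : b₂ ≠ 0) (x y₁ y₂ : ℝ) :
    (∑ a ∈ range (n + 1), (-1 : ℂ) ^ a * (Nat.choose (m + n + 1) (n - a) : ℂ) *
          (b₁ : ℂ) ^ a * (b₂ : ℂ) ^ (-(a : ℤ) - 1) * BPolyChar χ₁ (n - a) (b₁ * x + y₁) *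
          BPolyChar χ₂ (m + a + 1) (b₂ * x + y₂))
      - (∑ a ∈ range (m + 1), (-1 : ℂ) ^ a * (Nat.choose (m + n + 1) (m - a) : ℂ) *
          (b₂ : ℂ) ^ a * (b₁ : ℂ) ^ (-(a : ℤ) - 1) * BPolyChar χ₂ (m - a) (b₂ * x + y₂) *
          BPolyChar χ₁ (n + a + 1) (b₁ * x + y₁)) =
      ((-1 : ℂ) ^ (m + 1) / ((b₁ : ℂ) ^ (m + 1) * (b₂ : ℂ) ^ (n + 1))) *
        ∑ a ∈ range (m + n + 2), (-1 : ℂ) ^ a * (Nat.choose (m + n + 1) a : ℂ) *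
          (b₁ : ℂ) ^ a * (b₂ : ℂ) ^ (m + n + 1 - a) * BPolyChar χ₁ (m + n + 1 - a) y₁ *
          BPolyChar χ₂ a y₂ := by
  have hb₁' : (b₁ : ℂ) ≠ 0 := Complex.ofReal_ne_zero.mpr hb₁
  have hb₂' : (b₂ : ℂ) ≠ 0 := Complex.ofReal_ne_zero.mpr hb₂
  have hp := (isAppellSequence_BPolyChar χ₁).inv_pow_smul_comp_affine hb₁ y₁
  have hq := (isAppellSequence_BPolyChar χ₂).inv_pow_smul_comp_affine hb₂ y₂
  have conv_eq := hq.alternatingBinomialConv_eq hp (m + n + 1) x 0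
  simp only [Complex.real_smul, Complex.ofReal_pow, Complex.ofReal_inv, mul_zero, zero_add]
    at conv_eq
  rw [sum_sub_sum_eq_alternatingBinomialConv hb₁' hb₂' m n
      (fun i ↦ BPolyChar χ₁ i (b₁ * x + y₁)) (fun i ↦ BPolyChar χ₂ i (b₂ * x + y₂)),
    div_mul_sum_eq_alternatingBinomialConv hb₁' hb₂' m n
      (fun i ↦ BPolyChar χ₁ i y₁) (fun i ↦ BPolyChar χ₂ i y₂), conv_eq]

/-- Reciprocity relation for generalized Bernoulli polynomials (identity (36)). -/
theorem generalized_bernoulli_reciprocity (m n : ℕ) (hm : 1 ≤ m) (hn : 1 ≤ n)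
    (k₁ k₂ : ℕ) [NeZero k₁] [NeZero k₂]
    (χ₁ : DirichletCharacter ℂ k₁) (χ₂ : DirichletCharacter ℂ k₂)
    (h₁ : χ₁ ≠ 1) (h₂ : χ₂ ≠ 1) (hprim₁ : χ₁.IsPrimitive) (hprim₂ : χ₂.IsPrimitive)
    (b₁ b₂ : ℝ) (hb₁ : b₁ ≠ 0) (hb₂ : b₂ ≠ 0) (x y₁ y₂ : ℝ) :
    (∑ a ∈ Finset.range (n + 1), (-1 : ℂ) ^ a * (Nat.choose (m + n + 1) (n - a) : ℂ) *
          (b₁ : ℂ) ^ a * (b₂ : ℂ) ^ (-(a : ℤ) - 1) * BPolyChar χ₁ (n - a) (b₁ * x + y₁) *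
          BPolyChar χ₂ (m + a + 1) (b₂ * x + y₂))
      - (∑ a ∈ Finset.range (m + 1), (-1 : ℂ) ^ a * (Nat.choose (m + n + 1) (m - a) : ℂ) *
          (b₂ : ℂ) ^ a * (b₁ : ℂ) ^ (-(a : ℤ) - 1) * BPolyChar χ₂ (m - a) (b₂ * x + y₂) *
          BPolyChar χ₁ (n + a + 1) (b₁ * x + y₁)) =
      ((-1 : ℂ) ^ (m + 1) / ((b₁ : ℂ) ^ (m + 1) * (b₂ : ℂ) ^ (n + 1))) *
        ∑ a ∈ Finset.range (m + n + 2), (-1 : ℂ) ^ a * (Nat.choose (m + n + 1) a : ℂ) *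
          (b₁ : ℂ) ^ a * (b₂ : ℂ) ^ (m + n + 1 - a) * BPolyChar χ₁ (m + n + 1 - a) y₁ *
          BPolyChar χ₂ a y₂ :=
  generalized_bernoulli_reciprocity_general m n k₁ k₂ χ₁ χ₂ b₁ b₂ hb₁ hb₂ x y₁ y₂
end
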